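/- Let ν be the unique probability measure on LO_0 invariant for the process seen from the front (i.e. Q_t ν = ν for all t ≥ 0, where Q_t π is the pushforward under θ of ∫ P_t(ω,·) dπ(ω)). There exist constants ε > 0 and K < ∞ such that for all natural numbers L and M and every measurable set A ⊆ Ω depending only on the coordinates in ⟦L, L+M⟧: | ν(A) − μ(A) | ≤ K·e^{−ε·L}. -/

import Mathlib

open MeasureTheory ProbabilityTheory Filter Topology

noncomputable section

/-- The configuration space of the East model on `ℤ`: `0` ↔ `false` (empty), `1` ↔ `true`. -/
abbrev Config : Type := ℤ → Bool

/-- The configuration `ω` flipped at site `x`. -/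
def flipAt (ω : Config) (x : ℤ) : Config := fun y => if y = x then !ω x else ω y

/-- `f` depends only on the coordinates in `S`. -/
def DependsOnF (f : Config → ℝ) (S : Set ℤ) : Prop :=
  ∀ ω ω' : Config, (∀ x ∈ S, ω x = ω' x) → f ω = f ω'

/-- The set `A` depends only on the coordinates in `S`. -/
def DependsOnSet (A : Set Config) (S : Set ℤ) : Prop :=
  ∀ ω ω' : Config, (∀ x ∈ S, ω x = ω' x) → (ω ∈ A ↔ ω' ∈ A)

/-- A cylinder (local) function: depends on finitely many coordinates. -/
def IsCylinder (f : Config → ℝ) : Prop := ∃ S : Finset ℤ, DependsOnF f ↑S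

/-- The East generator at density `p` of ones. -/
def eastGen (p : ℝ) (f : Config → ℝ) (ω : Config) : ℝ :=
  ∑' x : ℤ, (if ω (x + 1) = false then (1 : ℝ) else 0) *
    (if ω x = false then p else 1 - p) * (f (flipAt ω x) - f ω)

/-- Spatial translation: `(shift y ω) x = ω (x + y)`. -/
def shift (y : ℤ) (ω : Config) : Config := fun x => ω (x + y)

/-- Left-occupied configurations: identically `1` on a left half-line, with an empty site. -/
def LO : Set Config := {ω | (∃ y : ℤ, ∀ x < y, ω x = true) ∧ ∃ x, ω x = false}

/-- The front: position of the left-most zero. -/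
def front (ω : Config) : ℤ := sInf {x : ℤ | ω x = false}

/-- Left-occupied configurations with front at the origin. -/
def LO₀ : Set Config := {ω ∈ LO | front ω = 0}

/-- The configuration seen at distance `L` behind the front. -/
def θL (L : ℤ) (ω : Config) : Config := fun x =>
  if x < 0 then true else if x = 0 then false else ω (front ω + L + x)

/-- `f` averaged over the coordinate at site `1` w.r.t. Bernoulli(p). -/
def avg1 (p : ℝ) (f : Config → ℝ) (ω : Config) : ℝ :=
  p * f (Function.update ω 1 true) + (1 - p) * f (Function.update ω 1 false)

/-- The East process on `ℤ` at density `p`, together with its equilibrium measure. -/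
structure EastProcess where
  /-- equilibrium density of ones -/
  p : ℝ
  hp0 : 0 < p
  hp1 : p < 1
  /-- the Markov semigroup -/
  P : ℝ → Kernel Config Config
  markov : ∀ t : ℝ, IsMarkovKernel (P t)
  P0 : P 0 = Kernel.id
  semigroup : ∀ s t : ℝ, 0 ≤ s → 0 ≤ t → P (t + s) = (P s).comp (P t)
  feller : ∀ t : ℝ, 0 ≤ t → ∀ f : Config → ℝ, Continuous f →
    Continuous fun ω : Config => ∫ η, f η ∂(P t ω)
  timeCont : ∀ f : Config → ℝ, Continuous f → ∀ ω : Config,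
    Continuous fun t : ℝ => ∫ η, f η ∂(P t ω)
  shiftComm : ∀ t : ℝ, 0 ≤ t → ∀ y : ℤ, ∀ ω : Config,
    P t (shift y ω) = Measure.map (shift y) (P t ω)
  generator : ∀ f : Config → ℝ, IsCylinder f → ∀ ω : Config,
    HasDerivWithinAt (fun u : ℝ => ∫ η, f η ∂(P u ω)) (eastGen p f ω) (Set.Ici 0) 0
  /-- the product Bernoulli(p) measure -/
  μ : Measure Config
  μprob : IsProbabilityMeasure μ
  μprod : ∀ (S : Finset ℤ) (σ : ℤ → Bool),
    μ {ω : Config | ∀ x ∈ S, ω x = σ x} = ∏ x ∈ S, ENNReal.ofReal (if σ x then p else 1 - p)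
  /-- LO is stable for the dynamics -/
  loStable : ∀ t : ℝ, 0 ≤ t → ∀ ω ∈ LO, P t ω LO = 1

/-- The set of Rayleigh quotients defining the spectral gap. -/
def gapSet (E : EastProcess) : Set ℝ :=
  {r | ∃ f : Config → ℝ, IsCylinder f ∧ 0 < variance f E.μ ∧
    r = (-∫ ω, f ω * eastGen E.p f ω ∂E.μ) / variance f E.μ}

/-- The spectral gap of the East process. -/
def gap (E : EastProcess) : ℝ := sInf (gapSet E)

/-- The product measure `μ̃`: all ones on the negative half-line, a zero at the origin,
Bernoulli(p) on the positive half-line. -/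
def IsMuTilde (p : ℝ) (μt : Measure Config) : Prop :=
  IsProbabilityMeasure μt ∧
  ∀ (S : Finset ℤ) (σ : ℤ → Bool),
    μt {ω : Config | ∀ x ∈ S, ω x = σ x} =
      ∏ x ∈ S, ENNReal.ofReal
        (if x < 0 then (if σ x then 1 else 0)
         else if x = 0 then (if σ x then 0 else 1)
         else (if σ x then p else 1 - p))

/-- The law at time `t` of the process seen from the front started from `π`. -/
def Qt (E : EastProcess) (t : ℝ) (π : Measure Config) : Measure Config :=
  Measure.map (θL 0) (π.bind fun ω => E.P t ω)

namespace EastAux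

section generic
variable {V : Type*} [NormedAddCommGroup V] [NormedSpace ℝ V] [CompleteSpace V]

/-- exponential of a bounded operator -/
def opExp (L : V →L[ℝ] V) : V →L[ℝ] V := NormedSpace.exp L

lemma opExp_zero : opExp (0 : V →L[ℝ] V) = ContinuousLinearMap.id ℝ V := by
  unfold opExp; rw [NormedSpace.exp_zero]; rfl

lemma opExp_add (L : V →L[ℝ] V) (s t : ℝ) (G : V) :
    opExp ((s + t) • L) G = opExp (s • L) (opExp (t • L) G) := by
  unfold opExp
  letI : NormedAlgebra ℚ (V →L[ℝ] V) := NormedAlgebra.restrictScalars ℚ ℝ _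
  rw [add_smul, NormedSpace.exp_add_of_commute]
  · rfl
  · exact ((Commute.refl _).smul_left _).smul_right _

lemma opExp_deriv (L : V →L[ℝ] V) (G : V) :
    HasDerivAt (fun t : ℝ => opExp (t • L) G) (L G) 0 := by
  have h := hasDerivAt_exp_smul_const (𝕂 := ℝ) L 0
  have h2 := ((ContinuousLinearMap.apply ℝ V G).hasFDerivAt).comp_hasDerivAt (0 : ℝ) h
  simpa [opExp, Function.comp_def] using h2

lemma exp_pos_bound {ι : Type*} (T : V →L[ℝ] V) (κ : ℝ) (hκ : 0 ≤ κ)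
    (ρ : ι → Seminorm ℝ V) (hρ : ∀ i, Continuous (ρ i)) (w : ι → ℝ)
    (hw : ∀ i, 0 ≤ w i)
    (step : ∀ (G : V) (K : ℝ), 0 ≤ K → (∀ i, ρ i G ≤ K * w i) → ∀ i, ρ i (T G) ≤ κ * K * w i)
    (G : V) (K : ℝ) (hK : 0 ≤ K) (hG : ∀ i, ρ i G ≤ K * w i) (t : ℝ) (ht : 0 ≤ t) (i : ι) :
    ρ i (opExp (t • T) G) ≤ Real.exp (t * κ) * K * w i := by
  have hpow : ∀ n : ℕ, ∀ i, ρ i ((T ^ n) G) ≤ κ ^ n * K * w i := by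
    intro n
    induction n with
    | zero => intro i; simpa using hG i
    | succ n ih =>
      intro i
      have := step ((T ^ n) G) (κ ^ n * K) (by positivity) ih i
      rw [pow_succ']
      calc ρ i ((T * T ^ n) G) = ρ i (T ((T ^ n) G)) := rfl
        _ ≤ _ := this
        _ = _ := by ring
  have hs : HasSum (fun n : ℕ => ((n.factorial : ℝ)⁻¹ • (t • T) ^ n) G)
      (opExp (t • T) G) := by
    have h := NormedSpace.exp_series_hasSum_exp' (𝕂 := ℝ) (t • T)
    exact h.mapL (ContinuousLinearMap.apply ℝ V G)
  have hlim := ((hρ i).tendsto _).comp hs.tendsto_sum_nat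
  refine le_of_tendsto hlim (Eventually.of_forall fun N => ?_)
  simp only [Function.comp]
  calc ρ i (∑ n ∈ Finset.range N, ((n.factorial : ℝ)⁻¹ • (t • T) ^ n) G)
      ≤ ∑ n ∈ Finset.range N, ρ i (((n.factorial : ℝ)⁻¹ • (t • T) ^ n) G) := by
        exact Finset.le_sum_of_subadditive (ρ i) (map_zero _).le (map_add_le_add _) _ _
    _ ≤ ∑ n ∈ Finset.range N, ((t * κ) ^ n / n.factorial) * (K * w i) := by
        refine Finset.sum_le_sum fun n _ => ?_
        have e : ((n.factorial : ℝ)⁻¹ • (t • T) ^ n) G = ((n.factorial : ℝ)⁻¹ * t ^ n) • ((T ^ n) G) := by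
          rw [smul_pow, smul_smul]; rfl
        rw [e, map_smul_eq_mul, Real.norm_of_nonneg (by positivity)]
        calc _ ≤ ((n.factorial : ℝ)⁻¹ * t ^ n) * (κ ^ n * K * w i) := by
              gcongr
              exact hpow n i
          _ = _ := by rw [mul_pow]; ring
    _ = (∑ n ∈ Finset.range N, ((t * κ) ^ n / n.factorial)) * (K * w i) := by
        rw [Finset.sum_mul]
    _ ≤ Real.exp (t * κ) * (K * w i) := by
        have := hw i
        gcongr
        exact Real.sum_le_exp_of_nonneg (by positivity) N
    _ = _ := by ring

lemma exp_bound {ι : Type*} (L : V →L[ℝ] V) (c κ : ℝ) (hκ : 0 ≤ κ)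
    (ρ : ι → Seminorm ℝ V) (hρ : ∀ i, Continuous (ρ i)) (w : ι → ℝ)
    (hw : ∀ i, 0 ≤ w i)
    (step : ∀ (G : V) (K : ℝ), 0 ≤ K → (∀ i, ρ i G ≤ K * w i) →
      ∀ i, ρ i (L G + c • G) ≤ κ * K * w i)
    (G : V) (K : ℝ) (hK : 0 ≤ K) (hG : ∀ i, ρ i G ≤ K * w i) (t : ℝ) (ht : 0 ≤ t) (i : ι) :
    ρ i (opExp (t • L) G) ≤ Real.exp (t * (κ - c)) * K * w i := by
  have h1 := exp_pos_bound (L + c • (1 : V →L[ℝ] V)) κ hκ ρ hρ w hw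
    (fun G K hK h => step G K hK h) G K hK hG t ht i
  have e : NormedSpace.exp (t • L) =
      Real.exp (-(t * c)) • NormedSpace.exp (t • (L + c • (1 : V →L[ℝ] V))) := by
    have hthis : t • L = (-(t * c)) • (1 : V →L[ℝ] V) + t • (L + c • (1 : V →L[ℝ] V)) := by
      rw [smul_add, smul_smul, neg_smul]; abel
    letI : NormedAlgebra ℚ (V →L[ℝ] V) := NormedAlgebra.restrictScalars ℚ ℝ _
    rw [hthis, NormedSpace.exp_add_of_commute]
    · have h2 : NormedSpace.exp ((-(t * c)) • (1 : V →L[ℝ] V))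
          = Real.exp (-(t * c)) • (1 : V →L[ℝ] V) := by
        have := NormedSpace.algebraMap_exp_comm (𝕂 := ℝ) (𝔸 := V →L[ℝ] V) (-(t * c))
        rw [Algebra.algebraMap_eq_smul_one, Algebra.algebraMap_eq_smul_one] at this
        rw [← this, Real.exp_eq_exp_ℝ]
      rw [h2, smul_mul_assoc, one_mul]
    · exact ((Commute.one_left _).smul_left _)
  unfold opExp at h1 ⊢
  rw [e, smul_apply, map_smul_eq_mul, Real.norm_of_nonneg (Real.exp_pos _).le]
  calc _ ≤ Real.exp (-(t * c)) * (Real.exp (t * κ) * K * w i) := by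
        gcongr
    _ = _ := by
        rw [show t * (κ - c) = -(t * c) + t * κ by ring, Real.exp_add]; ring

end generic

/-- Continuous observables. -/
abbrev CF := C(Config, ℝ)

/-- composition with a continuous self-map as a continuous linear map -/
def compC (φ : C(Config, Config)) : CF →L[ℝ] CF :=
  LinearMap.mkContinuous
    { toFun := fun f => f.comp φ
      map_add' := fun _ _ => rfl
      map_smul' := fun _ _ => rfl } 1 (by
      intro f
      rw [one_mul]
      refine (ContinuousMap.norm_le _ (norm_nonneg _)).2 fun ω => ?_
      exact f.norm_coe_le_norm (φ ω))

@[simp] lemma compC_apply (φ : C(Config, Config)) (f : CF) (ω : Config) :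
    compC φ f ω = f (φ ω) := rfl

/-- the map setting the coordinate `x` to `b` -/
def updC (x : ℤ) (b : Bool) : C(Config, Config) :=
  ⟨fun ω => Function.update ω x b, by fun_prop⟩

/-- averaging over the coordinate `x` -/
def av (p : ℝ) (x : ℤ) : CF →L[ℝ] CF :=
  p • compC (updC x true) + (1 - p) • compC (updC x false)

@[simp] lemma av_apply (p : ℝ) (x : ℤ) (f : CF) (ω : Config) :
    av p x f ω = p * f (Function.update ω x true) + (1 - p) * f (Function.update ω x false) := rfl

/-- the constraint at `x` -/
def cst (x : ℤ) : CF :=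
  ⟨fun ω => if ω (x + 1) = false then 1 else 0, by
    have h1 : Continuous fun b : Bool => (if b = false then (1 : ℝ) else 0) :=
      continuous_of_discreteTopology
    exact h1.comp (continuous_apply (x + 1))⟩

lemma cst_apply (x : ℤ) (ω : Config) : cst x ω = if ω (x + 1) = false then 1 else 0 := rfl

/-- multiplication by an observable -/
def mulC (c : CF) : CF →L[ℝ] CF := ContinuousLinearMap.mul ℝ CF c

@[simp] lemma mulC_apply (c f : CF) (ω : Config) : mulC c f ω = c ω * f ω := rfl

/-- the local generator at `x` -/
def Lx (p : ℝ) (x : ℤ) : CF →L[ℝ] CF := (mulC (cst x)).comp (av p x - ContinuousLinearMap.id ℝ CF)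

lemma Lx_apply (p : ℝ) (x : ℤ) (f : CF) (ω : Config) :
    Lx p x f ω = cst x ω * (av p x f ω - f ω) := rfl

/-- the generator restricted to the sites of `Λ` -/
def Lop (p : ℝ) (Λ : Finset ℤ) : CF →L[ℝ] CF := ∑ x ∈ Λ, Lx p x

lemma Lop_apply (p : ℝ) (Λ : Finset ℤ) (f : CF) (ω : Config) :
    Lop p Λ f ω = ∑ x ∈ Λ, Lx p x f ω := by
  simp [Lop, ContinuousMap.sum_apply]

/-- the semigroup generated by `Lop` -/
def Sg (p : ℝ) (Λ : Finset ℤ) (t : ℝ) : CF →L[ℝ] CF := opExp (t • Lop p Λ)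

/-- absolute value of a continuous functional as a seminorm -/
def absSemi (φ : CF →L[ℝ] ℝ) : Seminorm ℝ CF := (normSeminorm ℝ ℝ).comp φ.toLinearMap

lemma absSemi_apply (φ : CF →L[ℝ] ℝ) (G : CF) : absSemi φ G = |φ G| := rfl

lemma absSemi_cont (φ : CF →L[ℝ] ℝ) : Continuous (absSemi φ) := by
  change Continuous fun G => |φ G|
  exact φ.continuous.abs

/-- evaluation functional -/
def ev (ω : Config) : CF →L[ℝ] ℝ := ContinuousMap.evalCLM ℝ ω

@[simp] lemma ev_apply (ω : Config) (G : CF) : ev ω G = G ω := rfl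

lemma Sg_zero (p : ℝ) (Λ : Finset ℤ) (G : CF) : Sg p Λ 0 G = G := by
  unfold Sg; rw [zero_smul, opExp_zero]; rfl

lemma Sg_add (p : ℝ) (Λ : Finset ℤ) (s t : ℝ) (G : CF) :
    Sg p Λ (s + t) G = Sg p Λ s (Sg p Λ t G) := opExp_add _ _ _ _

/-- the local heat-bath operator -/
lemma Lx_add (p : ℝ) (x : ℤ) (G : CF) (ω : Config) :
    Lx p x G ω + G ω = if ω (x + 1) = false then av p x G ω else G ω := by
  rw [Lx_apply, cst_apply]; split_ifs <;> ring

lemma Lop_add (p : ℝ) (Λ : Finset ℤ) (G : CF) (ω : Config) :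
    (Lop p Λ G + (Λ.card : ℝ) • G) ω =
      ∑ x ∈ Λ, if ω (x + 1) = false then av p x G ω else G ω := by
  rw [ContinuousMap.add_apply, Lop_apply, ContinuousMap.smul_apply, smul_eq_mul]
  simp_rw [← Lx_add]
  rw [Finset.sum_add_distrib, Finset.sum_const, nsmul_eq_mul]

lemma av_abs_le {p : ℝ} (hp0 : 0 ≤ p) (hp1 : p ≤ 1) (x : ℤ) (G : CF) (ω : Config) (K : ℝ)
    (h1 : ∀ b, |G (Function.update ω x b)| ≤ K) : |av p x G ω| ≤ K := by
  rw [av_apply]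
  have h2 := abs_le.1 (h1 true)
  have h3 := abs_le.1 (h1 false)
  rw [abs_le]; constructor <;> nlinarith

lemma Sg_norm_le {p : ℝ} (hp0 : 0 ≤ p) (hp1 : p ≤ 1) (Λ : Finset ℤ) (t : ℝ) (ht : 0 ≤ t)
    (G : CF) : ‖Sg p Λ t G‖ ≤ ‖G‖ := by
  refine (ContinuousMap.norm_le _ (norm_nonneg _)).2 fun ω => ?_
  have := exp_bound (Lop p Λ) Λ.card Λ.card (by positivity) (fun ω : Config => absSemi (ev ω))
    (fun ω => absSemi_cont _) (fun _ => 1) (fun _ => zero_le_one)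
    (by
      intro G K hK h ω
      simp only [absSemi_apply, ev_apply, mul_one] at h ⊢
      rw [Lop_add]
      refine (Finset.abs_sum_le_sum_abs _ _).trans ?_
      rw [← nsmul_eq_mul]
      refine Finset.sum_le_card_nsmul _ _ _ fun x _ => ?_
      split_ifs
      · exact av_abs_le hp0 hp1 _ _ _ _ fun b => h _
      · exact h _)
    G ‖G‖ (norm_nonneg _) (fun ω => by simpa [absSemi_apply] using G.norm_coe_le_norm ω) t ht ω
  simpa [absSemi_apply, Sg] using this

lemma av_dep {p : ℝ} {G : CF} {S : Set ℤ} (h : DependsOnF G S) (x : ℤ) :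
    DependsOnF (av p x G) S := by
  intro ω ω' hω
  have : ∀ b, G (Function.update ω x b) = G (Function.update ω' x b) := by
    intro b
    refine h _ _ fun z hz => ?_
    by_cases hzx : z = x
    · subst hzx; simp
    · simp [Function.update_of_ne hzx, hω z hz]
  simp only [av_apply, this]

lemma dep_update {G : CF} {S : Set ℤ} (h : DependsOnF G S) {x : ℤ} (hx : x ∉ S) (ω : Config)
    (b : Bool) : G (Function.update ω x b) = G ω := by
  refine h _ _ fun z hz => ?_
  rw [Function.update_of_ne]
  rintro rfl; exact hx hz

lemma Lx_zero_of_dep {p : ℝ} {G : CF} {S : Set ℤ} (h : DependsOnF G S) {x : ℤ} (hx : x ∉ S)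
    (ω : Config) : Lx p x G ω = 0 := by
  rw [Lx_apply, av_apply, dep_update h hx, dep_update h hx]; ring

lemma Lop_dep {p : ℝ} {G : CF} {a N : ℤ} (h : DependsOnF G (Set.Icc a N)) (Λ : Finset ℤ) {N' : ℤ}
    (hN : N ≤ N') (hΛ : ∀ x ∈ Λ, a ≤ x ∧ x + 1 ≤ N') : DependsOnF (Lop p Λ G) (Set.Icc a N') := by
  intro ω ω' hω
  rw [Lop_apply, Lop_apply]
  refine Finset.sum_congr rfl fun x hx => ?_
  have h1 : ∀ z ∈ Set.Icc a N, ω z = ω' z := fun z hz => hω z ⟨hz.1, hz.2.trans hN⟩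
  rw [Lx_apply, Lx_apply, av_dep h x _ _ h1, h _ _ h1, cst_apply, cst_apply, hω (x + 1)]
  have := hΛ x hx
  constructor <;> linarith [this.1, this.2]

lemma Sg_dep {p : ℝ} {G : CF} {a N : ℤ} (h : DependsOnF G (Set.Icc a N)) (Λ : Finset ℤ)
    (hΛ : ∀ x ∈ Λ, a ≤ x ∧ x + 1 ≤ N) (t : ℝ) (ht : 0 ≤ t) :
    DependsOnF (Sg p Λ t G) (Set.Icc a N) := by
  intro ω ω' hω
  have := exp_bound (Lop p Λ) 0 0 le_rfl
    (fun i : {q : Config × Config // ∀ x ∈ Set.Icc a N, q.1 x = q.2 x} =>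
      absSemi (ev i.1.1 - ev i.1.2))
    (fun ω => absSemi_cont _) (fun _ => 0) (fun _ => le_rfl)
    (by
      rintro G K hK h ⟨⟨ω, ω'⟩, hω⟩
      simp only [absSemi_apply, sub_apply, ev_apply, mul_zero, zero_smul,
        add_zero] at h ⊢
      have hd : DependsOnF G (Set.Icc a N) := by
        intro ω ω' hω
        have := h ⟨⟨ω, ω'⟩, hω⟩
        simpa [sub_eq_zero] using this
      simp [Lop_dep hd Λ le_rfl hΛ ω ω' hω])
    G 1 zero_le_one (by
      rintro ⟨⟨ω, ω'⟩, hω⟩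
      simp [absSemi_apply, h ω ω' hω]) t ht ⟨⟨ω, ω'⟩, hω⟩
  simp only [absSemi_apply, sub_apply, ev_apply, mul_zero] at this
  have h2 := abs_nonpos_iff.1 this
  exact sub_eq_zero.1 h2

/-- propagation of gradients -/
lemma grad_bound {p : ℝ} (hp0 : 0 ≤ p) (hp1 : p ≤ 1) (Λ : Finset ℤ) (m : ℤ)
    (G : CF) (K : ℝ) (hK : 0 ≤ K) (Z : Set ℤ)
    (hZ : ∀ x ∈ Λ, x + 1 ∈ Z → x ∈ Z)
    (hG : ∀ z ∈ Z, ∀ ω b, |G (Function.update ω z b) - G ω| ≤ K * Real.exp ((m : ℝ) - z))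
    (t : ℝ) (ht : 0 ≤ t) (z : ℤ) (hz : z ∈ Z) (ω : Config) (b : Bool) :
    |Sg p Λ t G (Function.update ω z b) - Sg p Λ t G ω| ≤
      Real.exp (3 * t) * K * Real.exp ((m : ℝ) - z) := by
  have := exp_bound (Lop p Λ) Λ.card (Λ.card + 3) (by positivity)
    (fun i : Z × Config × Bool => absSemi (ev (Function.update i.2.1 i.1.1 i.2.2) - ev i.2.1))
    (fun ω => absSemi_cont _) (fun i => Real.exp ((m : ℝ) - i.1.1)) (fun _ => (Real.exp_pos _).le)
    (by
      rintro G K hK h ⟨⟨z, hz⟩, ω, b⟩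
      simp only [absSemi_apply, sub_apply, ev_apply] at h ⊢
      have h' : ∀ z ∈ Z, ∀ ω b, |G (Function.update ω z b) - G ω| ≤ K * Real.exp ((m : ℝ) - z) :=
        fun z hz ω b => h ⟨⟨z, hz⟩, ω, b⟩
      clear h
      rw [Lop_add, Lop_add, ← Finset.sum_sub_distrib]
      refine (Finset.abs_sum_le_sum_abs _ _).trans ?_
      have hav : ∀ x, |av p x G (Function.update ω z b) - av p x G ω| ≤
          K * Real.exp ((m : ℝ) - z) := by
        intro x
        by_cases hxz : z = x
        · subst hxz
          simp only [av_apply, Function.update_idem, sub_self, abs_zero]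
          positivity
        · have e : ∀ c, Function.update (Function.update ω z b) x c =
              Function.update (Function.update ω x c) z b :=
            fun c => Function.update_comm hxz _ _ _
          have h1 := abs_le.1 (h' z hz (Function.update ω x true) b)
          have h2 := abs_le.1 (h' z hz (Function.update ω x false) b)
          simp only [av_apply, e]
          rw [abs_le]; constructor <;> nlinarith
      have key : ∀ x ∈ Λ, |(if Function.update ω z b (x + 1) = false then
          av p x G (Function.update ω z b) else G (Function.update ω z b)) -
          (if ω (x + 1) = false then av p x G ω else G ω)| ≤
          K * Real.exp ((m : ℝ) - z) +
            (if x = z - 1 then 3 * (K * Real.exp ((m : ℝ) - z)) else 0) := by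
        intro x hx
        by_cases hxz : x = z - 1
        · have hxz' : x + 1 = z := by omega
          have hxZ : x ∈ Z := hZ x hx (hxz' ▸ hz)
          have hd : ∀ ω, |av p x G ω - G ω| ≤ 3 * (K * Real.exp ((m : ℝ) - z)) := by
            intro ω
            have h1 := abs_le.1 (h' x hxZ ω true)
            have h2 := abs_le.1 (h' x hxZ ω false)
            have h3 : K * Real.exp ((m : ℝ) - x) ≤ 3 * (K * Real.exp ((m : ℝ) - z)) := by
              have : (m : ℝ) - x = ((m : ℝ) - z) + 1 := by
                rw [← hxz']; push_cast; ring
              rw [this, Real.exp_add]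
              have h4 := Real.exp_one_lt_d9
              have h5 : 0 ≤ K * Real.exp ((m : ℝ) - z) := by positivity
              nlinarith
            rw [av_apply]
            rw [abs_le]; constructor <;> nlinarith
          rw [if_pos hxz]
          have h3 := abs_le.1 (h' z hz ω b)
          have h4 := abs_le.1 (hd ω)
          have h5 := abs_le.1 (hav x)
          have h6 : 0 ≤ K * Real.exp ((m : ℝ) - z) := by positivity
          rw [abs_le]
          split_ifs <;> constructor <;> linarith
        · rw [if_neg hxz, add_zero]
          have : Function.update ω z b (x + 1) = ω (x + 1) :=
            Function.update_of_ne (by omega) _ _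
          rw [this]
          split_ifs
          · exact hav x
          · exact h' z hz ω b
      refine (Finset.sum_le_sum key).trans ?_
      rw [Finset.sum_add_distrib, Finset.sum_const, nsmul_eq_mul, Finset.sum_ite_eq']
      have h6 : 0 ≤ K * Real.exp ((m : ℝ) - z) := by positivity
      split_ifs <;> nlinarith)
    G K hK (by
      rintro ⟨⟨z, hz⟩, ω, b⟩
      exact hG z hz ω b) t ht ⟨⟨z, hz⟩, ω, b⟩
  simp only [absSemi_apply, sub_apply, ev_apply] at this
  rw [show t * (↑Λ.card + 3 - (Λ.card : ℝ)) = 3 * t by ring] at this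
  exact this

/-- finite speed of the front -/
lemma front_bound {p : ℝ} (hp0 : 0 ≤ p) (hp1 : p ≤ 1) (Λ : Finset ℤ) (x : ℤ)
    (G : CF) (hG : ∀ (u : ℤ) (ω : Config), (∀ z < u, ω z = true) → |G ω| ≤ Real.exp ((x : ℝ) - u))
    (t : ℝ) (ht : 0 ≤ t) (u : ℤ) (ω : Config) (hω : ∀ z < u, ω z = true) :
    |Sg p Λ t G ω| ≤ Real.exp (3 * t) * Real.exp ((x : ℝ) - u) := by
  have := exp_bound (Lop p Λ) Λ.card (Λ.card + 3) (by positivity)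
    (fun i : {q : ℤ × Config // ∀ z < q.1, q.2 z = true} => absSemi (ev i.1.2))
    (fun ω => absSemi_cont _) (fun i => Real.exp ((x : ℝ) - i.1.1)) (fun _ => (Real.exp_pos _).le)
    (by
      rintro G K hK h ⟨⟨u, ω⟩, hω⟩
      simp only [absSemi_apply, ev_apply] at h ⊢
      have h' : ∀ (u : ℤ) (ω : Config), (∀ z < u, ω z = true) → |G ω| ≤ K * Real.exp ((x : ℝ) - u) :=
        fun u ω hω => h ⟨⟨u, ω⟩, hω⟩
      clear h
      simp only at hω
      rw [Lop_add]
      refine (Finset.abs_sum_le_sum_abs _ _).trans ?_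
      have h6 : 0 ≤ K * Real.exp ((x : ℝ) - u) := by positivity
      have key : ∀ y ∈ Λ, |(if ω (y + 1) = false then av p y G ω else G ω)| ≤
          K * Real.exp ((x : ℝ) - u) +
            (if y = u - 1 then 3 * (K * Real.exp ((x : ℝ) - u)) else 0) := by
        intro y hy
        rcases lt_trichotomy y (u - 1) with hyu | hyu | hyu
        · rw [if_neg, if_neg (by omega), add_zero]
          · exact h' u ω hω
          · rw [hω (y + 1) (by omega)]; simp
        · rw [if_pos hyu]
          split_ifs
          · have h7 : |av p y G ω| ≤ K * Real.exp ((x : ℝ) - (u - 1 : ℤ)) := by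
              refine av_abs_le hp0 hp1 _ _ _ _ fun b => h' _ _ fun z hz => ?_
              rw [Function.update_of_ne (by omega)]
              exact hω z (by omega)
            refine h7.trans ?_
            have : (x : ℝ) - (u - 1 : ℤ) = ((x : ℝ) - u) + 1 := by push_cast; ring
            rw [this, Real.exp_add]
            have h4 := Real.exp_one_lt_d9
            nlinarith
          · have := h' u ω hω
            linarith
        · rw [if_neg (by omega : ¬ y = u - 1), add_zero]
          split_ifs
          · refine av_abs_le hp0 hp1 _ _ _ _ fun b => h' _ _ fun z hz => ?_
            rw [Function.update_of_ne (by omega)]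
            exact hω z hz
          · exact h' u ω hω
      refine (Finset.sum_le_sum key).trans ?_
      rw [Finset.sum_add_distrib, Finset.sum_const, nsmul_eq_mul, Finset.sum_ite_eq']
      split_ifs <;> nlinarith)
    G 1 zero_le_one (by
      rintro ⟨⟨u, ω⟩, hω⟩
      simpa [absSemi_apply] using hG u ω hω) t ht ⟨⟨u, ω⟩, hω⟩
  simp only [absSemi_apply, ev_apply] at this
  rw [show t * (↑Λ.card + 3 - (Λ.card : ℝ)) = 3 * t by ring, mul_one] at this
  exact this

end EastAux

namespace EastAux

/-- expectation under the kernel -/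
def Pf (E : EastProcess) (t : ℝ) (f : CF) (ω : Config) : ℝ := ∫ η, f η ∂(E.P t ω)

lemma intCF (m : Measure Config) [IsFiniteMeasure m] (f : CF) : Integrable f m := by
  refine Integrable.of_bound (f.continuous.measurable.aestronglyMeasurable) ‖f‖ ?_
  exact Eventually.of_forall fun ω => f.norm_coe_le_norm ω

lemma abs_integral_le (m : Measure Config) [IsProbabilityMeasure m] (f : Config → ℝ) (K : ℝ)
    (h : ∀ ω, |f ω| ≤ K) : |∫ ω, f ω ∂m| ≤ K := by
  have := norm_integral_le_of_norm_le_const (μ := m) (f := f) (C := K) (Eventually.of_forall h)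
  simpa using this

lemma Pf_abs_le (E : EastProcess) (t : ℝ) (f : CF) (ω : Config) (K : ℝ) (h : ∀ ω, |f ω| ≤ K) :
    |Pf E t f ω| ≤ K := by
  haveI := E.markov t
  exact abs_integral_le _ _ _ h

lemma Pf_norm (E : EastProcess) (t : ℝ) (f : CF) (ω : Config) : |Pf E t f ω| ≤ ‖f‖ :=
  Pf_abs_le E t f ω _ fun ω => f.norm_coe_le_norm ω

/-- the semigroup as a continuous observable -/
def PC (E : EastProcess) (t : ℝ) (ht : 0 ≤ t) (f : CF) : CF := ⟨Pf E t f, E.feller t ht f f.continuous⟩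

lemma Pf_sub (E : EastProcess) (t : ℝ) (f g : CF) (ω : Config) :
    Pf E t (f - g) ω = Pf E t f ω - Pf E t g ω := by
  haveI := E.markov t
  exact integral_sub (intCF _ f) (intCF _ g)

lemma Pf_add (E : EastProcess) (t : ℝ) (f g : CF) (ω : Config) :
    Pf E t (f + g) ω = Pf E t f ω + Pf E t g ω := by
  haveI := E.markov t
  exact integral_add (intCF _ f) (intCF _ g)

lemma Pf_smul (E : EastProcess) (t : ℝ) (c : ℝ) (f : CF) (ω : Config) :
    Pf E t (c • f) ω = c * Pf E t f ω := by
  exact integral_const_mul c _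

lemma Pf_semi (E : EastProcess) (s t : ℝ) (hs : 0 ≤ s) (ht : 0 ≤ t) (f : CF) (ω : Config) :
    Pf E (t + s) f ω = Pf E t (PC E s hs f) ω := by
  haveI := E.markov t
  haveI := E.markov s
  unfold Pf
  rw [E.semigroup s t hs ht, Kernel.integral_comp (intCF _ f)]
  rfl

lemma Pf_zero (E : EastProcess) (f : CF) (ω : Config) : Pf E 0 f ω = f ω := by
  unfold Pf
  rw [E.P0, Kernel.id_apply, integral_dirac]

lemma Pf_meas (E : EastProcess) (t : ℝ) (f : CF) : Measurable (Pf E t f) := by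
  haveI := E.markov t
  exact (f.continuous.measurable.stronglyMeasurable.integral_kernel (κ := E.P t)).measurable

lemma Pf_joint (E : EastProcess) (f : CF) :
    Measurable (Function.uncurry fun (t : ℝ) (ω : Config) => Pf E t f ω) :=
  measurable_uncurry_of_continuous_of_measurable (u := fun (t : ℝ) (ω : Config) => Pf E t f ω)
    (fun ω => E.timeCont f f.continuous ω) (fun t => Pf_meas E t f)

lemma Pf_cont (E : EastProcess) (f : CF) (ω : Config) : Continuous fun t => Pf E t f ω :=
  E.timeCont f f.continuous ω

/-- The resolvent of the semigroup. -/
def res (E : EastProcess) (h : CF) (ω : Config) : ℝ :=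
  ∫ s in Set.Ioi (0 : ℝ), Real.exp (-s) * Pf E s h ω

lemma res_int (E : EastProcess) (h : CF) (ω : Config) (c : ℝ) :
    IntegrableOn (fun s => Real.exp (-s) * Pf E s h ω) (Set.Ioi c) := by
  have hc : Continuous fun s => Real.exp (-s) * Pf E s h ω := by
    have := Pf_cont E h ω
    fun_prop
  refine Integrable.mono' ((integrableOn_exp_neg_Ioi c).const_mul ‖h‖) hc.aestronglyMeasurable ?_
  refine Eventually.of_forall fun s => ?_
  rw [norm_mul, Real.norm_of_nonneg (Real.exp_pos _).le, mul_comm]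
  have := Pf_norm E s h ω
  rw [Real.norm_eq_abs]
  gcongr

lemma res_cont (E : EastProcess) (h : CF) : Continuous (res E h) := by
  unfold res
  refine continuous_of_dominated (bound := fun s => ‖h‖ * Real.exp (-s)) ?_ ?_ ?_ ?_
  · intro ω
    exact (res_int E h ω 0).aestronglyMeasurable
  · intro ω
    refine Eventually.of_forall fun s => ?_
    rw [norm_mul, Real.norm_of_nonneg (Real.exp_pos _).le, mul_comm]
    have := Pf_norm E s h ω
    rw [Real.norm_eq_abs]
    gcongr
  · exact (integrableOn_exp_neg_Ioi 0).const_mul ‖h‖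
  · refine (ae_restrict_iff' measurableSet_Ioi).2 (Eventually.of_forall fun s hs => ?_)
    exact continuous_const.mul (E.feller s (le_of_lt hs) h h.continuous)

/-- the resolvent as an observable -/
def resC (E : EastProcess) (h : CF) : CF := ⟨res E h, res_cont E h⟩

lemma Pf_res (E : EastProcess) (h : CF) (u : ℝ) (hu : 0 ≤ u) (ω : Config) :
    Pf E u (resC E h) ω =
      Real.exp u * (res E h ω - ∫ s in (0 : ℝ)..u, Real.exp (-s) * Pf E s h ω) := by
  haveI := E.markov u
  have h1 : Pf E u (resC E h) ω =
      ∫ s in Set.Ioi (0 : ℝ), ∫ η, Real.exp (-s) * Pf E s h η ∂(E.P u ω) := by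
    change ∫ η, (∫ s in Set.Ioi (0 : ℝ), Real.exp (-s) * Pf E s h η) ∂(E.P u ω) = _
    rw [integral_integral_swap]
    have hm : Measurable (Function.uncurry fun (η : Config) (s : ℝ) => Real.exp (-s) * Pf E s h η) := by
      have h2 := Pf_joint E h
      have h3 : Measurable fun q : Config × ℝ => Pf E q.2 h q.1 := h2.comp measurable_swap
      exact (by fun_prop : Measurable fun q : Config × ℝ => Real.exp (-q.2)).mul h3
    have hb : Integrable (fun q : Config × ℝ => ‖h‖ * Real.exp (-q.2))
        ((E.P u ω).prod (volume.restrict (Set.Ioi 0))) :=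
      (integrable_const ‖h‖).mul_prod (integrableOn_exp_neg_Ioi 0)
    refine Integrable.mono' hb hm.aestronglyMeasurable (Eventually.of_forall ?_)
    rintro ⟨η, s⟩
    simp only [Function.uncurry]
    rw [norm_mul, Real.norm_of_nonneg (Real.exp_pos _).le, mul_comm]
    have := Pf_norm E s h η
    rw [Real.norm_eq_abs]
    gcongr
  have h2 : ∀ s ∈ Set.Ioi (0 : ℝ), (∫ η, Real.exp (-s) * Pf E s h η ∂(E.P u ω)) =
      Real.exp u * (Real.exp (-(s + u)) * Pf E (s + u) h ω) := by
    intro s hs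
    rw [integral_const_mul, add_comm s u, Pf_semi E s u (le_of_lt hs) hu, ← mul_assoc, ← Real.exp_add]
    rw [show u + -(u + s) = -s by ring]
    rfl
  rw [h1, setIntegral_congr_fun measurableSet_Ioi h2, integral_const_mul]
  congr 1
  have h3 := (measurePreserving_add_right (volume : Measure ℝ) u).setIntegral_preimage_emb
    (MeasurableEquiv.addRight u).measurableEmbedding (fun s => Real.exp (-s) * Pf E s h ω) (Set.Ioi u)
  have h4 : (fun x : ℝ => x + u) ⁻¹' Set.Ioi u = Set.Ioi 0 := by
    ext x; simp
  rw [h4] at h3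
  rw [h3]
  have h5 := intervalIntegral.integral_interval_add_Ioi (res_int E h ω 0) (res_int E h ω u)
  unfold res
  linarith

lemma Pf_res_deriv (E : EastProcess) (h : CF) (u : ℝ) (hu : 0 ≤ u) (ω : Config) :
    HasDerivWithinAt (fun u => Pf E u (resC E h) ω) (Pf E u (resC E h) ω - Pf E u h ω)
      (Set.Ici 0) u := by
  have hc : Continuous fun s => Real.exp (-s) * Pf E s h ω := by
    have := Pf_cont E h ω
    fun_prop
  have h1 : HasDerivAt (fun u => ∫ s in (0 : ℝ)..u, Real.exp (-s) * Pf E s h ω)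
      (Real.exp (-u) * Pf E u h ω) u := (hc.integral_hasStrictDerivAt 0 u).hasDerivAt
  have h2 := (Real.hasDerivAt_exp u).mul (h1.const_sub (res E h ω))
  have h3 : HasDerivWithinAt (fun u => Pf E u (resC E h) ω)
      (Real.exp u * (res E h ω - ∫ s in (0 : ℝ)..u, Real.exp (-s) * Pf E s h ω) +
        Real.exp u * -(Real.exp (-u) * Pf E u h ω)) (Set.Ici 0) u := by
    refine h2.hasDerivWithinAt.congr_of_mem ?_ hu
    intro v hv
    exact Pf_res E h v hv ω
  convert h3 using 1
  rw [← Pf_res E h u hu, mul_neg, ← mul_assoc, ← Real.exp_add, add_neg_cancel, Real.exp_zero]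
  ring

/-- A function and its (pointwise) generator. -/
def IsGen (E : EastProcess) (f g : CF) : Prop :=
  ∀ ω, HasDerivWithinAt (fun u : ℝ => Pf E u f ω) (g ω) (Set.Ici 0) 0

lemma res_ge (E : EastProcess) (f g : CF) (h : IsGen E f g) (ω : Config) :
    f ω ≤ res E (f - g) ω := by
  set w := resC E (f - g) with hw
  obtain ⟨ω0, -, h0⟩ := isCompact_univ.exists_isMaxOn (Set.univ_nonempty (α := Config))
    (f - w).continuous.continuousOn
  have hmax : ∀ η, (f - w) η ≤ (f - w) ω0 := fun η => h0 (Set.mem_univ η)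
  have hd := (h ω0).sub (Pf_res_deriv E (f - g) 0 le_rfl ω0)
  have hneg : g ω0 - (Pf E 0 (resC E (f - g)) ω0 - Pf E 0 (f - g) ω0) ≤ 0 := by
    have hset : Set.Ici (0 : ℝ) \ {0} = Set.Ioi 0 := by simp
    rw [hasDerivWithinAt_iff_tendsto_slope, hset] at hd
    refine le_of_tendsto hd ?_
    filter_upwards [self_mem_nhdsWithin] with u hu
    have hu' : (0 : ℝ) < u := hu
    rw [slope_def_field]
    refine div_nonpos_of_nonpos_of_nonneg ?_ (by linarith)
    simp only [Pi.sub_apply]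
    rw [← Pf_sub, ← Pf_sub, ← hw, Pf_zero]
    haveI := E.markov u
    have : Pf E u (f - w) ω0 ≤ (f - w) ω0 := by
      have h3 : ∫ η, (f - w) η ∂(E.P u ω0) ≤ ∫ η, (f - w) ω0 ∂(E.P u ω0) :=
        integral_mono (intCF _ _) (integrable_const _) hmax
      rw [integral_const, probReal_univ, one_smul] at h3
      exact h3
    linarith
  rw [Pf_zero, Pf_zero] at hneg
  have h5 := hmax ω
  have h6 : (f - g) ω0 = f ω0 - g ω0 := rfl
  have h7 : ∀ η, (f - w) η = f η - res E (f - g) η := fun _ => rfl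
  have h8 : resC E (f - g) ω0 = res E (f - g) ω0 := rfl
  rw [h7, h7] at h5
  linarith

lemma res_neg (E : EastProcess) (h : CF) (ω : Config) : res E (-h) ω = - res E h ω := by
  unfold res
  rw [← integral_neg]
  congr 1; ext s
  have : Pf E s (-h) ω = - Pf E s h ω := by
    unfold Pf; rw [← integral_neg]; rfl
  rw [this]; ring

lemma res_eq (E : EastProcess) (f g : CF) (h : IsGen E f g) : f = resC E (f - g) := by
  ext ω
  refine le_antisymm (res_ge E f g h ω) ?_
  have h1 : IsGen E (-f) (-g) := by
    intro ω
    have := (h ω).neg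
    refine this.congr_of_mem ?_ (by simp)
    intro u _
    unfold Pf; simp only [Pi.neg_apply]; rw [← integral_neg]; rfl
  have h2 := res_ge E (-f) (-g) h1 ω
  rw [show -f - -g = -(f - g) by abel, res_neg] at h2
  have h3 : (-f) ω = - f ω := rfl
  have h4 : resC E (f - g) ω = res E (f - g) ω := rfl
  linarith

/-- Kolmogorov's forward equation -/
lemma Pf_deriv (E : EastProcess) (f g : CF) (h : IsGen E f g) (u : ℝ) (hu : 0 ≤ u) (ω : Config) :
    HasDerivWithinAt (fun u => Pf E u f ω) (Pf E u g ω) (Set.Ici 0) u := by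
  have h1 := Pf_res_deriv E (f - g) u hu ω
  rw [← res_eq E f g h, Pf_sub] at h1
  convert h1 using 1
  ring

lemma Pf_lip (E : EastProcess) (f g : CF) (h : IsGen E f g) (u : ℝ) (hu : 0 ≤ u) (ω : Config) :
    |Pf E u f ω - f ω| ≤ u * ‖g‖ := by
  have := (convex_Ici (0 : ℝ)).norm_image_sub_le_of_norm_hasDerivWithin_le
    (f := fun u => Pf E u f ω) (f' := fun u => Pf E u g ω) (C := ‖g‖)
    (fun x hx => Pf_deriv E f g h x hx ω) (fun x _ => Pf_norm E x g ω)
    (Set.mem_Ici.2 le_rfl) (Set.mem_Ici.2 hu)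
  simp only [Pf_zero, sub_zero, Real.norm_eq_abs, abs_of_nonneg hu] at this
  linarith

lemma Pf_second (E : EastProcess) (f g k : CF) (h : IsGen E f g) (h' : IsGen E g k)
    (u : ℝ) (hu : 0 ≤ u) (ω : Config) :
    |Pf E u f ω - f ω - u * g ω| ≤ u * u * ‖k‖ := by
  have := (convex_Icc (0 : ℝ) u).norm_image_sub_le_of_norm_hasDerivWithin_le
    (f := fun v => Pf E v f ω - v * g ω) (f' := fun v => Pf E v g ω - 1 * g ω) (C := u * ‖k‖)
    (fun x hx => ((Pf_deriv E f g h x hx.1 ω).mono Set.Icc_subset_Ici_self).sub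
      (((hasDerivAt_id x).mul_const (g ω)).hasDerivWithinAt))
    (fun x hx => by
      rw [one_mul]
      refine (Pf_lip E g k h' x hx.1 ω).trans ?_
      have := hx.2
      gcongr)
    (Set.left_mem_Icc.2 hu) (Set.right_mem_Icc.2 hu)
  simp only [Pf_zero, sub_zero, Real.norm_eq_abs, abs_of_nonneg hu, zero_mul] at this
  rw [show Pf E u f ω - f ω - u * g ω = Pf E u f ω - u * g ω - f ω by ring]
  linarith

lemma flipAt_eq (ω : Config) (x : ℤ) : flipAt ω x = Function.update ω x (!ω x) := by
  ext y
  by_cases h : y = x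
  · subst h; simp [flipAt]
  · simp [flipAt, h]

lemma eastGen_eq (p : ℝ) (f : CF) {S : Set ℤ} (hf : DependsOnF f S) (Λ : Finset ℤ)
    (hΛ : ∀ x ∈ S, x ∈ Λ) (ω : Config) : eastGen p f ω = Lop p Λ f ω := by
  have key : ∀ x, (if ω (x + 1) = false then (1 : ℝ) else 0) *
    (if ω x = false then p else 1 - p) * (f (flipAt ω x) - f ω) = Lx p x f ω := by
    intro x
    rw [Lx_apply, cst_apply, av_apply, flipAt_eq, mul_assoc]
    congr 1
    have hself : Function.update ω x (ω x) = ω := Function.update_eq_self x ω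
    cases hb : ω x
    · rw [hb] at hself
      rw [hself]; simp; ring
    · rw [hb] at hself
      rw [hself]; simp; ring
  unfold eastGen
  simp_rw [key]
  rw [tsum_eq_sum (s := Λ), Lop_apply]
  intro x hx
  exact Lx_zero_of_dep hf (fun h => hx (hΛ x h)) ω

lemma isGen_of_dep (E : EastProcess) (f : CF) {S : Set ℤ} (hf : DependsOnF f S) (Λ : Finset ℤ)
    (hΛ : ∀ x ∈ S, x ∈ Λ) : IsGen E f (Lop E.p Λ f) := by
  intro ω
  have hc : IsCylinder f := ⟨Λ, fun ω ω' h => hf _ _ fun x hx => h x (hΛ x hx)⟩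
  have := E.generator f hc ω
  rwa [eastGen_eq E.p f hf Λ hΛ] at this

end EastAux

namespace EastAux

lemma opExp_small {V : Type*} [NormedAddCommGroup V] [NormedSpace ℝ V] [CompleteSpace V]
    (L : V →L[ℝ] V) (ε : ℝ) (hε : 0 < ε) :
    ∀ᶠ u in 𝓝 (0 : ℝ), ∀ G : V, ‖opExp (u • L) G - G - u • L G‖ ≤ ε * |u| * ‖G‖ := by
  have h := hasDerivAt_exp_smul_const (𝕂 := ℝ) L 0
  rw [hasDerivAt_iff_isLittleO] at h
  filter_upwards [h.def hε] with u hu G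
  simp only [zero_smul, NormedSpace.exp_zero, one_mul, sub_zero, Real.norm_eq_abs] at hu
  have h2 := (NormedSpace.exp (u • L) - 1 - u • L).le_of_opNorm_le hu G
  exact h2

lemma cmp (E : EastProcess) (Λ : Finset ℤ) (a N : ℤ) (f : CF) (hf : DependsOnF f (Set.Icc a N))
    (hΛ : ∀ x ∈ Λ, a ≤ x ∧ x + 1 ≤ N) (η : ℝ) (t : ℝ) (ht : 0 ≤ t)
    (hη : ∀ r, 0 ≤ r → r ≤ t → ∀ ω,
      |Lop E.p (Finset.Icc a N) (Sg E.p Λ r f) ω - Lop E.p Λ (Sg E.p Λ r f) ω| ≤ η) (ω : Config) :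
    |Pf E t f ω - Sg E.p Λ t f ω| ≤ t * η := by
  set L' := Lop E.p (Finset.Icc a N) with hL'
  set L'' := Lop E.p (Finset.Icc a (N + 1)) with hL''
  set C := ‖L''‖ * (‖L'‖ * ‖f‖) with hC
  have hη0 : 0 ≤ η := (abs_nonneg _).trans (hη 0 le_rfl ht ω)
  have main : ∀ δ : ℝ, 0 < δ → |Pf E t f ω - Sg E.p Λ t f ω| ≤ t * (η + δ * (C + ‖f‖)) := by
    intro δ hδ
    have ht0 : Tendsto (fun n : ℕ => t / (n : ℝ)) atTop (𝓝 0) :=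
      tendsto_const_div_atTop_nhds_zero_nat t
    have e1 := ht0.eventually (opExp_small (Lop E.p Λ) δ hδ)
    have e2 := ht0.eventually (gt_mem_nhds hδ)
    obtain ⟨n, ⟨hn1, hn2⟩, hn3⟩ := ((e1.and e2).and (eventually_ge_atTop 1)).exists
    set u := t / (n : ℝ) with hu
    have hn : (0 : ℝ) < n := by exact_mod_cast hn3
    have hu0 : 0 ≤ u := by positivity
    have hnu : n * u = t := by rw [hu]; field_simp
    set e := u * (η + δ * (C + ‖f‖)) with he
    have step : ∀ k : ℕ, k ≤ n → ∀ ω, |Pf E (k * u) f ω - Sg E.p Λ (k * u) f ω| ≤ k * e := by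
      intro k
      induction k with
      | zero => intro _ ω; simp [Pf_zero, Sg_zero]
      | succ k ih =>
        intro hk ω
        have ih' := ih (by omega)
        have hku : 0 ≤ (k : ℝ) * u := by positivity
        have hkt : (k : ℝ) * u ≤ t := by
          rw [← hnu]
          have : (k : ℝ) ≤ n := by exact_mod_cast (by omega : k ≤ n)
          gcongr
        have e3 : ((k + 1 : ℕ) : ℝ) * u = u + k * u := by push_cast; ring
        set G := Sg E.p Λ (k * u) f with hG
        rw [e3, Pf_semi E (k * u) u hku hu0, Sg_add, ← hG]
        have hGn : ‖G‖ ≤ ‖f‖ := Sg_norm_le E.hp0.le E.hp1.le Λ _ hku f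
        have hGd : DependsOnF G (Set.Icc a N) := Sg_dep hf Λ hΛ _ hku
        have hGd' : DependsOnF (L' G) (Set.Icc a (N + 1)) :=
          Lop_dep hGd _ (by omega) fun x hx => by
            rw [Finset.mem_Icc] at hx; omega
        have g1 : IsGen E G (L' G) := isGen_of_dep E G hGd _ (by simp)
        have g2 : IsGen E (L' G) (L'' (L' G)) := isGen_of_dep E (L' G) hGd' _ (by simp)
        have b1 := Pf_second E G _ _ g1 g2 u hu0 ω
        have b1' : ‖L'' (L' G)‖ ≤ C := by
          refine (L''.le_opNorm _).trans ?_
          have := L'.le_opNorm G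
          rw [hC]
          gcongr
          exact this.trans (by gcongr)
        have b2 := (ContinuousMap.norm_coe_le_norm _ ω).trans (hn1 G)
        rw [abs_of_nonneg hu0] at b2
        have b2' : |Sg E.p Λ u G ω - G ω - u * Lop E.p Λ G ω| ≤ δ * u * ‖G‖ := b2
        have b3 := hη (k * u) hku hkt ω
        have b4 : |Pf E u (PC E (k * u) hku f) ω - Pf E u G ω| ≤ k * e := by
          rw [← Pf_sub]
          exact Pf_abs_le E u _ ω _ fun ω => ih' ω
        have b5 : u * u * ‖L'' (L' G)‖ ≤ u * δ * C := by
          have : u * ‖L'' (L' G)‖ ≤ δ * C := by gcongr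
          calc _ = u * (u * ‖L'' (L' G)‖) := by ring
            _ ≤ u * (δ * C) := by gcongr
            _ = _ := by ring
        have b6 : δ * u * ‖G‖ ≤ δ * u * ‖f‖ := by gcongr
        have b7 : |u * (L' G ω - Lop E.p Λ G ω)| ≤ u * η := by
          rw [abs_mul, abs_of_nonneg hu0]; gcongr
        have b1 := abs_le.1 (b1.trans b5)
        have b2 := abs_le.1 (b2'.trans b6)
        have b4 := abs_le.1 b4
        have b7 := abs_le.1 b7
        have he' : ((k + 1 : ℕ) : ℝ) * e = k * e + (u * η + u * δ * C + δ * u * ‖f‖) := by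
          rw [he]; push_cast; ring
        rw [he', abs_le]
        constructor <;> linarith [b1.1, b1.2, b2.1, b2.2, b4.1, b4.2, b7.1, b7.2]
    have := step n le_rfl ω
    rw [hnu] at this
    refine this.trans (le_of_eq ?_)
    rw [he, ← mul_assoc, hnu]
  have hlim : Tendsto (fun δ : ℝ => t * (η + δ * (C + ‖f‖))) (𝓝[>] 0) (𝓝 (t * η)) := by
    have : Continuous fun δ : ℝ => t * (η + δ * (C + ‖f‖)) := by fun_prop
    have h := (this.tendsto 0).mono_left (nhdsWithin_le_nhds (s := Set.Ioi 0))
    simpa using h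
  refine ge_of_tendsto hlim ?_
  filter_upwards [self_mem_nhdsWithin] with δ hδ using main δ hδ

lemma Lx_abs_le {p : ℝ} (hp0 : 0 ≤ p) (hp1 : p ≤ 1) (x : ℤ) (G : CF) (ω : Config) (K : ℝ)
    (hK : ∀ b, |G (Function.update ω x b) - G ω| ≤ K) : |Lx p x G ω| ≤ K := by
  have h1 := abs_le.1 (hK true)
  have h2 := abs_le.1 (hK false)
  have hK0 : 0 ≤ K := (abs_nonneg _).trans (hK true)
  rw [Lx_apply, av_apply, cst_apply]
  split_ifs
  · rw [abs_le]; constructor <;> nlinarith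
  · simpa using hK0

/-- comparison with the finite-volume dynamics frozen at `m` -/
lemma cmp2 (E : EastProcess) (a b m N : ℤ) (f : CF) (hf : DependsOnF f (Set.Icc a b))
    (hN : b ≤ N) (hf1 : ‖f‖ ≤ 1) (K : ℝ) (hK : 0 ≤ K)
    (hm : ∀ z ≤ m, ∀ ω b, |f (Function.update ω z b) - f ω| ≤ K * Real.exp ((m : ℝ) - z))
    (t : ℝ) (ht : 0 ≤ t) (ω : Config) :
    |Pf E t f ω - Sg E.p ((Finset.Icc a N).erase m) t f ω| ≤
      t * (Real.exp (3 * t) * (2 * Real.exp ((b : ℝ) - (N + 1)) + K)) := by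
  set Λ := (Finset.Icc a N).erase m with hΛ
  have hΛ' : ∀ x ∈ Λ, a ≤ x ∧ x + 1 ≤ N + 1 := by
    intro x hx
    rw [hΛ, Finset.mem_erase, Finset.mem_Icc] at hx
    omega
  have hf' : DependsOnF f (Set.Icc a (N + 1)) := fun ω ω' h => hf _ _ fun x hx =>
    h x ⟨hx.1, by linarith [hx.2]⟩
  have p0 := E.hp0.le
  have p1 := E.hp1.le
  refine cmp E Λ a (N + 1) f hf' hΛ' _ t ht ?_ ω
  intro r hr hrt ω
  set G := Sg E.p Λ r f with hG
  have gA : ∀ ω b', |G (Function.update ω (N + 1) b') - G ω| ≤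
      Real.exp (3 * t) * 2 * Real.exp ((b : ℝ) - (N + 1)) := by
    intro ω b'
    have := grad_bound p0 p1 Λ b f 2 (by norm_num) Set.univ (by simp) (by
      intro z _ ω b'
      by_cases hz : z ≤ b
      · have h1 := abs_le.1 ((f.norm_coe_le_norm ω).trans hf1)
        have h2 := abs_le.1 ((f.norm_coe_le_norm (Function.update ω z b')).trans hf1)
        have h3 : 1 ≤ Real.exp ((b : ℝ) - z) := Real.one_le_exp (by
          have : (z : ℝ) ≤ b := by exact_mod_cast hz
          linarith)
        rw [abs_le]; constructor <;> linarith [h1.1, h1.2, h2.1, h2.2]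
      · rw [dep_update hf (by simp; omega)]
        simp; positivity) r hr (N + 1) (Set.mem_univ _) ω b'
    refine this.trans ?_
    push_cast
    gcongr
  have gB : ∀ ω b', |G (Function.update ω m b') - G ω| ≤ Real.exp (3 * t) * K := by
    intro ω b'
    have := grad_bound p0 p1 Λ m f K hK {z | z ≤ m} (by
      intro x hx h
      simp only [Set.mem_setOf_eq] at h ⊢; omega) (fun z hz => hm z hz) r hr m
      (by simp) ω b'
    refine this.trans ?_
    rw [sub_self, Real.exp_zero, mul_one]
    gcongr
  have hsub : Λ ⊆ Finset.Icc a (N + 1) := by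
    intro x hx
    rw [Finset.mem_Icc]; have := hΛ' x hx; omega
  rw [Lop_apply, Lop_apply, ← Finset.sum_sdiff hsub, add_sub_cancel_right]
  have hsub2 : Finset.Icc a (N + 1) \ Λ ⊆ {N + 1, m} := by
    intro x hx
    simp only [hΛ, Finset.mem_sdiff, Finset.mem_Icc, Finset.mem_erase, not_and, not_le,
      Finset.mem_insert, Finset.mem_singleton] at hx ⊢
    by_contra hc
    push Not at hc
    have := hx.2 hc.2 hx.1.1
    omega
  refine (Finset.abs_sum_le_sum_abs _ _).trans ?_
  refine (Finset.sum_le_sum_of_subset_of_nonneg hsub2 fun _ _ _ => abs_nonneg _).trans ?_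
  have l1 := Lx_abs_le p0 p1 (N + 1) G ω _ (gA ω)
  have l2 := Lx_abs_le p0 p1 m G ω _ (gB ω)
  have : ∑ x ∈ ({N + 1, m} : Finset ℤ), |Lx E.p x G ω| ≤ |Lx E.p (N + 1) G ω| + |Lx E.p m G ω| := by
    by_cases h : N + 1 = m
    · simp [h]
    · rw [Finset.sum_pair h]
  refine this.trans ?_
  linarith

end EastAux

namespace EastAux

instance instProbMu (E : EastProcess) : IsProbabilityMeasure E.μ := E.μprob
instance instMarkovP (E : EastProcess) (t : ℝ) : IsMarkovKernel (E.P t) := E.markov t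

/-- cylinder sets -/
def cyl (S : Finset ℤ) (σ : Config) : Set Config := {ω : Config | ∀ x ∈ S, ω x = σ x}

lemma cyl_meas (S : Finset ℤ) (σ : Config) : MeasurableSet (cyl S σ) := by
  have : cyl S σ = ⋂ x ∈ S, (fun ω : Config => ω x) ⁻¹' {σ x} := by
    ext ω; simp [cyl]
  rw [this]
  exact Finset.measurableSet_biInter _ fun x _ => measurable_pi_apply x (measurableSet_singleton _)

lemma ext_cyl (m m' : Measure Config) [IsFiniteMeasure m] [IsFiniteMeasure m']
    (h : ∀ S σ, m (cyl S σ) = m' (cyl S σ)) : m = m' := by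
  haveI : ∀ I : Finset ℤ, IsFiniteMeasure (m'.map (I.restrict (π := fun _ : ℤ => Bool))) :=
    fun I => inferInstance
  refine IsProjectiveLimit.unique (P := fun I : Finset ℤ => m'.map (I.restrict)) ?_ ?_
  · intro I
    refine Measure.ext_of_singleton fun τ => ?_
    have hm : Measurable (I.restrict (π := fun _ : ℤ => Bool)) := Finset.measurable_restrict I
    rw [Measure.map_apply hm (measurableSet_singleton _),
      Measure.map_apply hm (measurableSet_singleton _)]
    have : I.restrict (π := fun _ : ℤ => Bool) ⁻¹' {τ} =
        cyl I (fun x => if hx : x ∈ I then τ ⟨x, hx⟩ else true) := by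
      ext ω
      simp only [Set.mem_preimage, Set.mem_singleton_iff, cyl, Set.mem_setOf_eq]
      constructor
      · rintro rfl x hx; simp [hx]
      · intro h; ext ⟨x, hx⟩
        have := h x hx
        simpa [hx] using this
    rw [this, h]
  · intro I; rfl

lemma mu_cyl (E : EastProcess) (S : Finset ℤ) (σ : Config) :
    E.μ (cyl S σ) = ∏ x ∈ S, ENNReal.ofReal (if σ x then E.p else 1 - E.p) := E.μprod S σ

lemma updC_apply (x : ℤ) (b : Bool) (ω : Config) : updC x b ω = Function.update ω x b := rfl

lemma pre_cyl_mem (S : Finset ℤ) (σ : Config) (x : ℤ) (hx : x ∈ S) :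
    updC x (σ x) ⁻¹' cyl S σ = cyl (S.erase x) σ := by
  ext ω
  simp only [Set.mem_preimage, cyl, Set.mem_setOf_eq, updC_apply]
  constructor
  · intro h z hz
    rw [Finset.mem_erase] at hz
    have := h z hz.2
    rwa [Function.update_of_ne hz.1] at this
  · intro h z hz
    by_cases hzx : z = x
    · subst hzx; simp
    · rw [Function.update_of_ne hzx]
      exact h z (Finset.mem_erase.2 ⟨hzx, hz⟩)

lemma pre_cyl_mem' (S : Finset ℤ) (σ : Config) (x : ℤ) (hx : x ∈ S) (b : Bool) (hb : b ≠ σ x) :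
    updC x b ⁻¹' cyl S σ = ∅ := by
  ext ω
  simp only [Set.mem_preimage, cyl, Set.mem_setOf_eq, updC_apply, Set.mem_empty_iff_false, iff_false]
  intro h
  have := h x hx
  simp at this
  exact hb this

lemma pre_cyl_nmem (S : Finset ℤ) (σ : Config) (x : ℤ) (hx : x ∉ S) (b : Bool) :
    updC x b ⁻¹' cyl S σ = cyl S σ := by
  ext ω
  simp only [Set.mem_preimage, cyl, Set.mem_setOf_eq, updC_apply]
  refine forall₂_congr fun z hz => ?_
  rw [Function.update_of_ne]
  rintro rfl; exact hx hz

lemma mu_upd (E : EastProcess) (x : ℤ) :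
    E.μ = ENNReal.ofReal E.p • E.μ.map (updC x true) +
      ENNReal.ofReal (1 - E.p) • E.μ.map (updC x false) := by
  have hm : ∀ b, Measurable (updC x b) := fun b => (updC x b).continuous.measurable
  haveI : IsFiniteMeasure (ENNReal.ofReal E.p • E.μ.map (updC x true) +
      ENNReal.ofReal (1 - E.p) • E.μ.map (updC x false)) := by
    haveI : ∀ b, IsFiniteMeasure (E.μ.map (updC x b)) := fun b => inferInstance
    haveI : ∀ (r : ℝ) b, IsFiniteMeasure (ENNReal.ofReal r • E.μ.map (updC x b)) := fun r b =>
      Measure.smul_finite _ ENNReal.ofReal_ne_top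
    infer_instance
  refine ext_cyl _ _ fun S σ => ?_
  rw [Measure.add_apply, Measure.smul_apply, Measure.smul_apply, smul_eq_mul, smul_eq_mul,
    Measure.map_apply (hm _) (cyl_meas S σ), Measure.map_apply (hm _) (cyl_meas S σ)]
  by_cases hx : x ∈ S
  · rw [mu_cyl, ← Finset.mul_prod_erase S _ hx, ← mu_cyl]
    cases hb : σ x
    · have h1 := pre_cyl_mem S σ x hx
      rw [hb] at h1
      rw [h1, pre_cyl_mem' S σ x hx true (by rw [hb]; simp)]
      simp
    · have h1 := pre_cyl_mem S σ x hx
      rw [hb] at h1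
      rw [h1, pre_cyl_mem' S σ x hx false (by rw [hb]; simp)]
      simp
  · rw [pre_cyl_nmem S σ x hx, pre_cyl_nmem S σ x hx, ← add_mul,
      ← ENNReal.ofReal_add E.hp0.le (by linarith [E.hp1])]
    simp

lemma mu_av (E : EastProcess) (x : ℤ) (g : CF) : ∫ ω, av E.p x g ω ∂E.μ = ∫ ω, g ω ∂E.μ := by
  conv_rhs => rw [mu_upd E x]
  have hm : ∀ b, Measurable (updC x b) := fun b => (updC x b).continuous.measurable
  haveI : ∀ b, IsFiniteMeasure (E.μ.map (updC x b)) := fun b => inferInstance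
  haveI : ∀ (r : ℝ) b, IsFiniteMeasure (ENNReal.ofReal r • E.μ.map (updC x b)) := fun r b =>
      Measure.smul_finite _ ENNReal.ofReal_ne_top
  rw [integral_add_measure (intCF _ g) (intCF _ g), integral_smul_measure, integral_smul_measure,
    integral_map (hm _).aemeasurable g.continuous.measurable.aestronglyMeasurable,
    integral_map (hm _).aemeasurable g.continuous.measurable.aestronglyMeasurable,
    ENNReal.toReal_ofReal E.hp0.le, ENNReal.toReal_ofReal (by linarith [E.hp1])]
  simp_rw [av_apply]
  rw [integral_add, integral_const_mul, integral_const_mul]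
  · rfl
  · exact (intCF E.μ (compC (updC x true) g)).const_mul _
  · exact (intCF E.μ (compC (updC x false) g)).const_mul _

/-- `c` does not depend on the coordinate `x` -/
def Indep (x : ℤ) (c : CF) : Prop := ∀ ω b, c (Function.update ω x b) = c ω

lemma av_mul (p : ℝ) {x : ℤ} {c : CF} (hc : Indep x c) (g : CF) : av p x (c * g) = c * av p x g := by
  ext ω
  simp only [av_apply, ContinuousMap.mul_apply, hc ω]
  ring

lemma av_indep (p : ℝ) (x : ℤ) (g : CF) : Indep x (av p x g) := by
  intro ω b; simp [av_apply]

lemma Indep.mul {x : ℤ} {c d : CF} (hc : Indep x c) (hd : Indep x d) : Indep x (c * d) := by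
  intro ω b; simp [hc ω b, hd ω b]

/-- integration against `μ` -/
def I (E : EastProcess) (g : CF) : ℝ := ∫ ω, g ω ∂E.μ

lemma I_add (E : EastProcess) (f g : CF) : I E (f + g) = I E f + I E g :=
  integral_add (intCF _ _) (intCF _ _)
lemma I_sub (E : EastProcess) (f g : CF) : I E (f - g) = I E f - I E g :=
  integral_sub (intCF _ _) (intCF _ _)
lemma I_smul (E : EastProcess) (c : ℝ) (g : CF) : I E (c • g) = c * I E g :=
  integral_const_mul _ _
lemma I_sum (E : EastProcess) {ι : Type*} (s : Finset ι) (g : ι → CF) :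
    I E (∑ i ∈ s, g i) = ∑ i ∈ s, I E (g i) := by
  unfold I
  rw [← integral_finset_sum _ fun i _ => intCF _ _]
  congr 1; ext ω
  rw [ContinuousMap.sum_apply]
lemma I_mono (E : EastProcess) (f g : CF) (h : ∀ ω, f ω ≤ g ω) : I E f ≤ I E g :=
  integral_mono (intCF _ _) (intCF _ _) h
lemma I_av (E : EastProcess) (x : ℤ) (g : CF) : I E (av E.p x g) = I E g := mu_av E x g

lemma I_c_av (E : EastProcess) {x : ℤ} {c : CF} (hc : Indep x c) (g : CF) :
    I E (c * av E.p x g) = I E (c * g) := by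
  rw [← av_mul E.p hc, I_av]

lemma I_sq_av (E : EastProcess) {x : ℤ} {c : CF} (hc : Indep x c) (h : CF) :
    I E (c * (av E.p x h * h)) = I E (c * (av E.p x h * av E.p x h)) := by
  have := I_c_av E (hc.mul (av_indep E.p x h)) h
  rw [← mul_assoc, ← mul_assoc, this]

lemma I_dir (E : EastProcess) {x : ℤ} {c : CF} (hc : Indep x c) (h : CF) :
    I E (h * (c * (av E.p x h - h))) = - I E (c * ((av E.p x h - h) * (av E.p x h - h))) := by
  have e1 : h * (c * (av E.p x h - h)) = c * (av E.p x h * h) - c * (h * h) := by ring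
  have e2 : c * ((av E.p x h - h) * (av E.p x h - h)) =
    c * (av E.p x h * av E.p x h) - c * (av E.p x h * h) - c * (av E.p x h * h) + c * (h * h) := by ring
  rw [e1, e2, I_add, I_sub, I_sub, I_sub, I_sq_av E hc]
  ring

lemma one_indep (x : ℤ) : Indep x 1 := fun _ _ => rfl

lemma I_nonneg (E : EastProcess) (g : CF) (h : ∀ ω, 0 ≤ g ω) : 0 ≤ I E g := integral_nonneg h

lemma I_av_sq (E : EastProcess) (x : ℤ) (h : CF) :
    I E (av E.p x h * av E.p x h) ≤ I E (h * h) := by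
  have h1 := I_sq_av E (one_indep x) h
  rw [one_mul, one_mul] at h1
  have h2 : 0 ≤ I E ((av E.p x h - h) * (av E.p x h - h)) := I_nonneg E _ fun ω => mul_self_nonneg _
  have e : (av E.p x h - h) * (av E.p x h - h) =
    (av E.p x h * av E.p x h) - (av E.p x h * h) - (av E.p x h * h) + (h * h) := by ring
  rw [e, I_add, I_sub, I_sub, h1] at h2
  linarith

lemma I_c_diff (E : EastProcess) {x : ℤ} {c : CF} (h0 : ∀ ω, 0 ≤ c ω)
    (h1 : ∀ ω, c ω ≤ 1) (h : CF) :
    I E ((c * (av E.p x h - h)) * (c * (av E.p x h - h))) ≤ I E (h * h) := by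
  have e0 : I E ((c * (av E.p x h - h)) * (c * (av E.p x h - h))) ≤
      I E ((av E.p x h - h) * (av E.p x h - h)) := by
    refine I_mono E _ _ fun ω => ?_
    simp only [ContinuousMap.mul_apply]
    have := h0 ω; have := h1 ω
    have h3 := mul_self_nonneg ((av E.p x h - h) ω)
    have h4 : c ω * c ω ≤ 1 := by nlinarith
    nlinarith
  refine e0.trans ?_
  have h1 := I_sq_av E (one_indep x) h
  rw [one_mul, one_mul] at h1
  have h2 : 0 ≤ I E (av E.p x h * av E.p x h) := I_nonneg E _ fun ω => mul_self_nonneg _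
  have e : (av E.p x h - h) * (av E.p x h - h) =
    (av E.p x h * av E.p x h) - (av E.p x h * h) - (av E.p x h * h) + (h * h) := by ring
  rw [e, I_add, I_sub, I_sub, h1]
  linarith

/-- L2 norm as a seminorm -/
def N2 (E : EastProcess) : Seminorm ℝ CF :=
  (normSeminorm ℝ (Lp ℝ 2 E.μ)).comp (ContinuousMap.toLp 2 E.μ ℝ).toLinearMap

lemma N2_cont (E : EastProcess) : Continuous (N2 E) := by
  change Continuous fun G => ‖ContinuousMap.toLp 2 E.μ ℝ G‖
  fun_prop

lemma N2_sq (E : EastProcess) (g : CF) : N2 E g * N2 E g = I E (g * g) := by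
  change ‖ContinuousMap.toLp 2 E.μ ℝ g‖ * ‖ContinuousMap.toLp 2 E.μ ℝ g‖ = _
  rw [← real_inner_self_eq_norm_mul_norm, ContinuousMap.inner_toLp]
  rfl

lemma N2_le_of_sq (E : EastProcess) (g : CF) (K : ℝ) (hK : 0 ≤ K) (h : I E (g * g) ≤ K * K) :
    N2 E g ≤ K := by
  rw [← N2_sq] at h
  exact abs_le_of_sq_le_sq' (by nlinarith) hK |>.2

lemma N2_le_norm (E : EastProcess) (g : CF) : N2 E g ≤ ‖g‖ := by
  refine N2_le_of_sq E g _ (norm_nonneg _) ?_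
  refine (le_abs_self _).trans (abs_integral_le _ _ _ fun ω => ?_)
  rw [ContinuousMap.mul_apply, abs_mul]
  have := g.norm_coe_le_norm ω
  rw [Real.norm_eq_abs] at this
  exact mul_le_mul this this (abs_nonneg _) (norm_nonneg _)

/-- the spectral gap inequality -/
lemma gap_ineq (E : EastProcess) (hgap : 0 < gap E) (h : CF) {S : Set ℤ} (hd : DependsOnF h S)
    (Λ : Finset ℤ) (hΛ : ∀ x ∈ S, x ∈ Λ) (hm : I E h = 0) :
    gap E * I E (h * h) ≤ - I E (h * Lop E.p Λ h) := by
  have hc : IsCylinder h := ⟨Λ, fun ω ω' h' => hd _ _ fun x hx => h' x (hΛ x hx)⟩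
  have hv : variance h E.μ = I E (h * h) := by
    rw [variance_of_integral_eq_zero h.continuous.measurable.aemeasurable hm]
    unfold I
    congr 1; ext ω; simp [sq]
  have hg : ∀ ω, eastGen E.p h ω = Lop E.p Λ h ω := eastGen_eq E.p h hd Λ hΛ
  have hbdd : BddBelow (gapSet E) := by
    by_contra hb
    have : gap E = 0 := Real.sInf_of_not_bddBelow hb
    linarith
  by_cases hv0 : 0 < variance h E.μ
  · have hmem : (-∫ ω, h ω * eastGen E.p h ω ∂E.μ) / variance h E.μ ∈ gapSet E := ⟨h, hc, hv0, rfl⟩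
    have h1 := csInf_le hbdd hmem
    have h2 : gap E ≤ (-∫ ω, h ω * eastGen E.p h ω ∂E.μ) / variance h E.μ := h1
    rw [le_div_iff₀ hv0, hv] at h2
    simp_rw [hg] at h2
    exact h2
  · have h0 : I E (h * h) = 0 := by
      rw [← hv]; exact le_antisymm (not_lt.1 hv0) (variance_nonneg _ _)
    rw [h0, mul_zero]
    have hz : ∀ᵐ ω ∂E.μ, h ω = 0 := by
      have h3 := (integral_eq_zero_iff_of_nonneg (fun ω => mul_self_nonneg (h ω))
        (intCF E.μ (h * h))).1 h0
      filter_upwards [h3] with ω hω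
      exact mul_self_eq_zero.1 hω
    have : I E (h * Lop E.p Λ h) = 0 := by
      unfold I
      rw [integral_eq_zero_of_ae]
      filter_upwards [hz] with ω hω
      simp [hω]
    rw [this]; simp

end EastAux

namespace EastAux

/-- `ζ` on `[a,y)` and `ω` elsewhere -/
def glue (a y : ℤ) (ω : Config) : C(Config, Config) :=
  ⟨fun ζ z => if a ≤ z ∧ z < y then ζ z else ω z, by
    refine continuous_pi fun z => ?_
    split_ifs
    · exact continuous_apply z
    · exact continuous_const⟩

lemma glue_apply (a y : ℤ) (ω ζ : Config) (z : ℤ) :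
    glue a y ω ζ z = if a ≤ z ∧ z < y then ζ z else ω z := rfl

lemma glue_in {a y : ℤ} (ω ζ : Config) {z : ℤ} (h : a ≤ z ∧ z < y) : glue a y ω ζ z = ζ z := by
  rw [glue_apply, if_pos h]

lemma glue_out {a y : ℤ} (ω ζ : Config) {z : ℤ} (h : ¬ (a ≤ z ∧ z < y)) : glue a y ω ζ z = ω z := by
  rw [glue_apply, if_neg h]

lemma cst_congr (x : ℤ) (ω ω' : Config) (h : ω (x + 1) = ω' (x + 1)) : cst x ω = cst x ω' := by
  rw [cst_apply, cst_apply, h]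

lemma cst_one (x : ℤ) (ω : Config) (h : ω (x + 1) = false) : cst x ω = 1 := by
  rw [cst_apply, h]; rfl

lemma glue_upd_in (a y : ℤ) (ω ζ : Config) (x : ℤ) (hx : a ≤ x ∧ x < y) (b : Bool) :
    Function.update (glue a y ω ζ) x b = glue a y ω (Function.update ζ x b) := by
  ext z
  by_cases hz : z = x
  · subst hz; simp [glue_apply, hx]
  · rw [Function.update_of_ne hz, glue_apply, glue_apply, Function.update_of_ne hz]

lemma glue_upd_out (a y : ℤ) (ω ζ : Config) (x : ℤ) (hx : ¬ (a ≤ x ∧ x < y)) (b : Bool) :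
    Function.update (glue a y ω ζ) x b = glue a y (Function.update ω x b) ζ := by
  ext z
  by_cases hz : z = x
  · subst hz; simp [glue_apply, hx]
  · rw [Function.update_of_ne hz, glue_apply, glue_apply, Function.update_of_ne hz]

lemma glue_upd_y (a y : ℤ) (hay : a ≤ y) (ω ζ : Config) (b : Bool) :
    Function.update (glue a y ω ζ) y b = glue a (y + 1) ω (Function.update ζ y b) := by
  ext z
  by_cases hz : z = y
  · subst hz; simp [glue_apply, hay]
  · rw [Function.update_of_ne hz, glue_apply, glue_apply, Function.update_of_ne hz]
    by_cases h : a ≤ z ∧ z < y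
    · rw [if_pos h, if_pos ⟨h.1, by omega⟩]
    · rw [if_neg h, if_neg (by omega)]

lemma sq_arith (C g n D2 X S : ℝ) (hC : 0 ≤ C) (hS : 0 ≤ S) (hD : D2 ≤ n * n * S)
    (hX : g * S ≤ -X) (hn : n * n ≤ C * g) :
    D2 + 2 * C * X + C * C * S ≤ (C - g / 2) * (C - g / 2) * S := by
  have h1 : C * (g * S) ≤ C * (-X) := by gcongr
  have h2 : n * n * S ≤ C * g * S := by gcongr
  nlinarith [mul_nonneg (sq_nonneg g) hS]

lemma glue_Lx_in (p : ℝ) (a y : ℤ) (ω : Config) (x : ℤ) (hx : a ≤ x ∧ x < y) (G : CF) :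
    compC (glue a y ω) (Lx p x G) = compC (glue a y ω) (cst x) *
      (av p x (compC (glue a y ω) G) - compC (glue a y ω) G) := by
  ext ζ
  simp only [compC_apply, Lx_apply, ContinuousMap.mul_apply, ContinuousMap.sub_apply, av_apply,
    glue_upd_in a y ω ζ x hx]

lemma step_in (E : EastProcess) (hgap : 0 < gap E) (a y : ℤ) (ω : Config) (hy : ω y = false)
    (G : CF) (C K n : ℝ) (hC0 : gap E / 2 ≤ C) (hC : n * n ≤ C * gap E)
    (hn : ((Finset.Ico a y).card : ℝ) ≤ n)
    (hK : 0 ≤ K) (hN : N2 E (compC (glue a y ω) G) ≤ K) (hI : I E (compC (glue a y ω) G) = 0) :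
    N2 E (compC (glue a y ω) (∑ x ∈ Finset.Ico a y, Lx E.p x G + C • G)) ≤ (C - gap E / 2) * K ∧
    I E (compC (glue a y ω) (∑ x ∈ Finset.Ico a y, Lx E.p x G + C • G)) = 0 := by
  set h := compC (glue a y ω) G with hh
  set c : ℤ → CF := fun x => compC (glue a y ω) (cst x) with hc
  set D : CF := ∑ x ∈ Finset.Ico a y, c x * (av E.p x h - h) with hD
  have e : compC (glue a y ω) (∑ x ∈ Finset.Ico a y, Lx E.p x G + C • G) = D + C • h := by
    rw [map_add, map_sum, map_smul]
    congr 1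
    refine Finset.sum_congr rfl fun x hx => ?_
    exact glue_Lx_in E.p a y ω x (Finset.mem_Ico.1 hx) G
  have hind : ∀ x, Indep x (c x) := by
    intro x ζ b
    simp only [hc, compC_apply]
    refine cst_congr _ _ _ ?_
    rw [glue_apply, glue_apply, Function.update_of_ne (by omega)]
  have hc0 : ∀ x ζ, 0 ≤ c x ζ := by
    intro x ζ; simp only [hc, compC_apply, cst_apply]; split_ifs <;> norm_num
  have hc1 : ∀ x ζ, c x ζ ≤ 1 := by
    intro x ζ; simp only [hc, compC_apply, cst_apply]; split_ifs <;> norm_num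
  have hcc : ∀ x ∈ Finset.Ico a y, ∀ ζ, cst x ζ ≤ c x ζ := by
    intro x hx ζ
    rw [Finset.mem_Ico] at hx
    by_cases hxy : x + 1 = y
    · have : c x ζ = 1 := by
        simp only [hc, compC_apply]
        refine cst_one _ _ ?_
        rw [glue_out _ _ (by omega : ¬ (a ≤ x + 1 ∧ x + 1 < y)), hxy, hy]
      rw [this, cst_apply]; split_ifs <;> norm_num
    · refine le_of_eq ?_
      simp only [hc, compC_apply]
      exact cst_congr _ _ _ (glue_in _ _ (by omega : (a ≤ x + 1 ∧ x + 1 < y))).symm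
  have hdep : DependsOnF h (Set.Ico a y) := by
    intro ζ ζ' hζ
    simp only [hh, compC_apply]
    congr 1
    ext z
    simp only [glue_apply]
    split_ifs with hz
    · rw [hζ z hz]
    · rfl
  have hgi := gap_ineq E hgap h hdep (Finset.Ico a y) (by simp) hI
  have hX : gap E * I E (h * h) ≤ - I E (h * D) := by
    refine hgi.trans ?_
    have e1 : h * Lop E.p (Finset.Ico a y) h = ∑ x ∈ Finset.Ico a y, h * (cst x * (av E.p x h - h)) := by
      ext ζ
      simp only [ContinuousMap.mul_apply, Lop_apply, Lx_apply, ContinuousMap.sum_apply,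
        ContinuousMap.sub_apply, Finset.mul_sum]
    have e2 : h * D = ∑ x ∈ Finset.Ico a y, h * (c x * (av E.p x h - h)) := by
      rw [hD, Finset.mul_sum]
    rw [e1, e2, I_sum, I_sum, neg_le_neg_iff]
    refine Finset.sum_le_sum fun x hx => ?_
    have hi2 : Indep x (cst x) := by
      intro ζ b
      simp only [cst_apply]
      rw [Function.update_of_ne (by omega)]
    rw [I_dir E (hind x), I_dir E hi2, neg_le_neg_iff]
    refine I_mono E _ _ fun ζ => ?_
    simp only [ContinuousMap.mul_apply]
    exact mul_le_mul_of_nonneg_right (hcc x hx ζ) (mul_self_nonneg _)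
  have hDn : N2 E D ≤ n * N2 E h := by
    have h1 : N2 E D ≤ ∑ x ∈ Finset.Ico a y, N2 E (c x * (av E.p x h - h)) :=
      Finset.le_sum_of_subadditive (N2 E) (map_zero _).le (map_add_le_add _) _ _
    have h2 : ∀ x ∈ Finset.Ico a y, N2 E (c x * (av E.p x h - h)) ≤ N2 E h := by
      intro x _
      refine N2_le_of_sq E _ _ (apply_nonneg _ _) ?_
      rw [N2_sq]
      exact I_c_diff E (hc0 x) (hc1 x) h
    refine (h1.trans (Finset.sum_le_card_nsmul _ _ _ h2)).trans ?_
    rw [nsmul_eq_mul]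
    gcongr
  have hn0 : 0 ≤ n := le_trans (by positivity) hn
  rw [e]
  constructor
  · have hS : I E (h * h) ≤ K * K := by
      rw [← N2_sq]
      exact mul_le_mul hN hN (apply_nonneg _ _) hK
    have hS0 : 0 ≤ I E (h * h) := I_nonneg E _ fun ω => mul_self_nonneg _
    refine N2_le_of_sq E _ _ (mul_nonneg (by linarith) hK) ?_
    have e3 : (D + C • h) * (D + C • h) = D * D + (2 * C) • (h * D) + (C * C) • (h * h) := by
      ext ζ; simp; ring
    rw [e3, I_add, I_add, I_smul, I_smul]
    have hD2 : I E (D * D) ≤ n * n * I E (h * h) := by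
      rw [← N2_sq, ← N2_sq]
      have := mul_le_mul hDn hDn (apply_nonneg _ _) (mul_nonneg hn0 (apply_nonneg _ _))
      linarith
    have hC1 : 0 ≤ C := by linarith
    refine (sq_arith C (gap E) n _ _ _ hC1 hS0 hD2 hX hC).trans ?_
    have : 0 ≤ (C - gap E / 2) * (C - gap E / 2) := mul_self_nonneg _
    nlinarith
  · rw [I_add, I_smul, hI, mul_zero, add_zero, hD, I_sum]
    refine Finset.sum_eq_zero fun x _ => ?_
    rw [mul_sub, I_sub, I_c_av E (hind x), sub_self]

/-- index set for the relaxation estimate -/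
abbrev RIdx (x0 N : ℤ) := {q : ℤ × Config // x0 ≤ q.1 ∧ q.1 ≤ N + 1 ∧ q.2 q.1 = false}

lemma step_out (E : EastProcess) (a x0 N : ℤ) (hax : a ≤ x0) (G : CF) (K : ℝ)
    (hN : ∀ i : RIdx x0 N, N2 E (compC (glue a i.1.1 i.1.2) G) ≤ K)
    (hI : ∀ i : RIdx x0 N, I E (compC (glue a i.1.1 i.1.2) G) = 0)
    (i : RIdx x0 N) (x : ℤ) (hx : x ≤ N) (hxa : x ≠ a - 1) (hxi : ¬ (a ≤ x ∧ x < i.1.1)) :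
    N2 E (compC (glue a i.1.1 i.1.2) (Lx E.p x G + G)) ≤ K ∧
    I E (compC (glue a i.1.1 i.1.2) (Lx E.p x G + G)) = 0 := by
  obtain ⟨⟨y, ω⟩, hy1, hy2, hy3⟩ := i
  simp only at hy1 hy2 hy3 hxi ⊢
  by_cases hω : ω (x + 1) = false
  · have hval : ∀ ζ, compC (glue a y ω) (Lx E.p x G + G) ζ =
        av E.p x G (glue a y ω ζ) := by
      intro ζ
      have := Lx_add E.p x G (glue a y ω ζ)
      rw [compC_apply, ContinuousMap.add_apply, this,
        glue_out ω ζ (by omega : ¬ (a ≤ x + 1 ∧ x + 1 < y)), if_pos hω]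
    by_cases hxy : x = y
    · subst hxy
      have e : compC (glue a x ω) (Lx E.p x G + G) = av E.p x (compC (glue a (x + 1) ω) G) := by
        ext ζ
        rw [hval ζ]
        simp only [av_apply, compC_apply, glue_upd_y a x (hax.trans hy1)]
      have i1 := hN ⟨⟨x + 1, ω⟩, by simp only; omega, by simp only; omega, hω⟩
      have i2 := hI ⟨⟨x + 1, ω⟩, by simp only; omega, by simp only; omega, hω⟩
      simp only at i1 i2
      rw [e, I_av]
      refine ⟨le_trans ?_ i1, i2⟩
      refine N2_le_of_sq E _ _ (apply_nonneg _ _) ?_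
      rw [N2_sq]
      exact I_av_sq E x _
    · have e : compC (glue a y ω) (Lx E.p x G + G) =
          E.p • compC (glue a y (Function.update ω x true)) G +
          (1 - E.p) • compC (glue a y (Function.update ω x false)) G := by
        ext ζ
        rw [hval ζ]
        simp only [av_apply, ContinuousMap.add_apply, ContinuousMap.smul_apply, compC_apply,
          glue_upd_out a y ω ζ x hxi, smul_eq_mul]
      have hb : ∀ b, Function.update ω x b y = false := by
        intro b; rw [Function.update_of_ne (Ne.symm hxy)]; exact hy3
      have n1 := hN ⟨⟨y, Function.update ω x true⟩, hy1, hy2, hb true⟩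
      have n2 := hN ⟨⟨y, Function.update ω x false⟩, hy1, hy2, hb false⟩
      have i1 := hI ⟨⟨y, Function.update ω x true⟩, hy1, hy2, hb true⟩
      have i2 := hI ⟨⟨y, Function.update ω x false⟩, hy1, hy2, hb false⟩
      simp only at n1 n2 i1 i2
      have p0 := E.hp0
      have p1 := E.hp1
      rw [e]
      constructor
      · refine (map_add_le_add _ _ _).trans ?_
        rw [map_smul_eq_mul, map_smul_eq_mul, Real.norm_of_nonneg p0.le,
          Real.norm_of_nonneg (by linarith)]
        nlinarith
      · rw [I_add, I_smul, I_smul, i1, i2]; ring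
  · have e : compC (glue a y ω) (Lx E.p x G + G) = compC (glue a y ω) G := by
      ext ζ
      have := Lx_add E.p x G (glue a y ω ζ)
      rw [compC_apply, ContinuousMap.add_apply, this,
        glue_out ω ζ (by omega : ¬ (a ≤ x + 1 ∧ x + 1 < y)), if_neg hω]
      rfl
    rw [e]
    exact ⟨hN ⟨⟨y, ω⟩, hy1, hy2, hy3⟩, hI ⟨⟨y, ω⟩, hy1, hy2, hy3⟩⟩

/-- the mean as a functional -/
def IL (E : EastProcess) : CF →L[ℝ] ℝ :=
  LinearMap.mkContinuous
    { toFun := I E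
      map_add' := I_add E
      map_smul' := I_smul E } 1 (by
      intro f
      rw [one_mul]
      exact abs_integral_le _ _ _ fun ω => f.norm_coe_le_norm ω)

lemma IL_apply (E : EastProcess) (g : CF) : IL E g = I E g := rfl

lemma relax (E : EastProcess) (hgap : 0 < gap E) (a a' x0 N : ℤ) (ha : a' ≤ a) (hax : a ≤ x0)
    (hxN : x0 ≤ N + 1) (f : CF)
    (hmean : ∀ y ≥ x0, ∀ ω, I E (compC (glue a y ω) f) = 0) (t : ℝ) (ht : 0 ≤ t) (ω : Config)
    (hω : ω x0 = false) :
    N2 E (compC (glue a x0 ω) (Sg E.p ((Finset.Icc a' N).erase (a - 1)) t f)) ≤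
      Real.exp (-(gap E / 2 * t)) * ‖f‖ := by
  set Λ := (Finset.Icc a' N).erase (a - 1) with hΛ
  set n : ℝ := (Λ.card : ℝ) with hn
  have hn0 : 0 ≤ n := by positivity
  set c : ℝ := n + (n * n / gap E + gap E) with hc
  set κ : ℝ := c - gap E / 2 with hκ
  have hκ0 : 0 ≤ κ := by
    rw [hκ, hc]
    have : 0 ≤ n * n / gap E := by positivity
    linarith
  set ρ : RIdx x0 N ⊕ RIdx x0 N → Seminorm ℝ CF := fun s => match s with
    | Sum.inl i => absSemi ((IL E).comp (compC (glue a i.1.1 i.1.2)))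
    | Sum.inr i => (N2 E).comp (compC (glue a i.1.1 i.1.2)).toLinearMap with hρ
  set w : RIdx x0 N ⊕ RIdx x0 N → ℝ := fun s => match s with
    | Sum.inl _ => 0
    | Sum.inr _ => 1 with hw
  have r1 : ∀ i G, ρ (Sum.inl i) G = |I E (compC (glue a i.1.1 i.1.2) G)| := fun i G => rfl
  have r2 : ∀ i G, ρ (Sum.inr i) G = N2 E (compC (glue a i.1.1 i.1.2) G) := fun i G => rfl
  have step : ∀ (G : CF) (K : ℝ), 0 ≤ K → (∀ i, ρ i G ≤ K * w i) →
      ∀ i, ρ i (Lop E.p Λ G + c • G) ≤ κ * K * w i := by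
    intro G K hK h
    have hN : ∀ i : RIdx x0 N, N2 E (compC (glue a i.1.1 i.1.2) G) ≤ K := by
      intro i
      have := h (Sum.inr i)
      rw [r2] at this
      simpa [hw] using this
    have hI : ∀ i : RIdx x0 N, I E (compC (glue a i.1.1 i.1.2) G) = 0 := by
      intro i
      have := h (Sum.inl i)
      rw [r1] at this
      simpa [hw] using this
    have key : ∀ i : RIdx x0 N, N2 E (compC (glue a i.1.1 i.1.2) (Lop E.p Λ G + c • G)) ≤ κ * K ∧
        I E (compC (glue a i.1.1 i.1.2) (Lop E.p Λ G + c • G)) = 0 := by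
      intro i
      set Ii := Finset.Ico a i.1.1 with hIi
      have hsub : Ii ⊆ Λ := by
        intro x hx
        have h2 := i.2.2.1
        rw [hIi, Finset.mem_Ico] at hx
        rw [hΛ, Finset.mem_erase, Finset.mem_Icc]
        omega
      have hcard : ((Λ \ Ii).card : ℝ) ≤ n := by
        rw [hn]; exact_mod_cast Finset.card_le_card Finset.sdiff_subset
      have hcard2 : (Ii.card : ℝ) ≤ n := by
        rw [hn]; exact_mod_cast Finset.card_le_card hsub
      set C := c - ((Λ \ Ii).card : ℝ) with hC
      have hCl : n * n / gap E + gap E ≤ C := by rw [hC, hc]; linarith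
      have hnn : 0 ≤ n * n / gap E := by positivity
      have sIn := step_in E hgap a i.1.1 i.1.2 i.2.2.2 G C K n (by linarith) (by
        have : (n * n / gap E) * gap E = n * n := by field_simp
        nlinarith) hcard2 hK (hN i) (hI i)
      have sOut := fun x (hx : x ∈ Λ \ Ii) => step_out E a x0 N hax G K hN hI i x
        (by
          rw [Finset.mem_sdiff, hΛ, Finset.mem_erase, Finset.mem_Icc] at hx
          omega)
        (by
          rw [Finset.mem_sdiff, hΛ, Finset.mem_erase, Finset.mem_Icc] at hx
          omega)
        (by
          rw [Finset.mem_sdiff, hIi, Finset.mem_Ico] at hx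
          exact hx.2)
      have e : compC (glue a i.1.1 i.1.2) (Lop E.p Λ G + c • G) =
          ∑ x ∈ Λ \ Ii, compC (glue a i.1.1 i.1.2) (Lx E.p x G + G) +
            compC (glue a i.1.1 i.1.2) (∑ x ∈ Ii, Lx E.p x G + C • G) := by
        rw [← map_sum, ← map_add]
        congr 1
        have e1 : Lop E.p Λ G = ∑ x ∈ Λ, Lx E.p x G := by
          ext ω; rw [Lop_apply, ContinuousMap.sum_apply]
        rw [e1, ← Finset.sum_sdiff hsub, Finset.sum_add_distrib, Finset.sum_const, hC, sub_smul,
          Nat.cast_smul_eq_nsmul]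
        abel
      rw [e]
      constructor
      · refine (map_add_le_add _ _ _).trans ?_
        have h1 : N2 E (∑ x ∈ Λ \ Ii, compC (glue a i.1.1 i.1.2) (Lx E.p x G + G)) ≤
            ((Λ \ Ii).card : ℝ) * K := by
          refine (Finset.le_sum_of_subadditive (N2 E) (map_zero _).le (map_add_le_add _) _ _).trans ?_
          rw [← nsmul_eq_mul]
          exact Finset.sum_le_card_nsmul _ _ _ fun x hx => (sOut x hx).1
        have h2 := sIn.1
        have h3 : κ * K = ((Λ \ Ii).card : ℝ) * K + (C - gap E / 2) * K := by
          rw [hκ, hC]; ring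
        linarith
      · rw [I_add, sIn.2, I_sum, Finset.sum_eq_zero fun x hx => (sOut x hx).2, add_zero]
    rintro (i | i)
    · rw [r1, (key i).2]; simp [hw]
    · rw [r2]; simpa [hw] using (key i).1
  have := exp_bound (Lop E.p Λ) c κ hκ0 ρ (by
      rintro (i | i)
      · exact absSemi_cont _
      · exact (N2_cont E).comp (compC (glue a i.1.1 i.1.2)).continuous) w (by
      rintro (i | i)
      · simp [hw]
      · simp [hw]) step f ‖f‖ (norm_nonneg _) (by
      rintro (i | i)
      · rw [r1, hmean _ i.2.1]; simp [hw]
      · rw [r2]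
        simp only [hw, mul_one]
        refine (N2_le_norm E _).trans ?_
        refine (ContinuousMap.norm_le _ (norm_nonneg _)).2 fun ω => ?_
        exact f.norm_coe_le_norm _) t ht (Sum.inr ⟨⟨x0, ω⟩, le_rfl, hxN, hω⟩)
  rw [r2] at this
  simp only [hw, mul_one] at this
  rw [show t * (κ - c) = -(gap E / 2 * t) by rw [hκ]; ring] at this
  exact this

end EastAux

namespace EastAux

/-- half the log of the inverse of the minimal single-site probability -/
def Bc (E : EastProcess) : ℝ := -Real.log (min E.p (1 - E.p)) / 2

lemma m0_pos (E : EastProcess) : 0 < min E.p (1 - E.p) := lt_min E.hp0 (by linarith [E.hp1])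

lemma Bc_nonneg (E : EastProcess) : 0 ≤ Bc E := by
  have : Real.log (min E.p (1 - E.p)) ≤ 0 :=
    Real.log_nonpos (m0_pos E).le ((min_le_left _ _).trans E.hp1.le)
  unfold Bc; linarith

lemma mu_cyl_lower (E : EastProcess) (S : Finset ℤ) (σ : Config) :
    Real.exp (-(2 * Bc E * S.card)) ≤ (E.μ (cyl S σ)).toReal := by
  rw [mu_cyl, ENNReal.toReal_prod]
  have h1 : Real.exp (-(2 * Bc E * S.card)) = ∏ _x ∈ S, min E.p (1 - E.p) := by
    rw [Finset.prod_const, ← Real.exp_log (m0_pos E), ← Real.exp_nat_mul]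
    unfold Bc; congr 1; ring
  rw [h1]
  refine Finset.prod_le_prod (fun _ _ => (m0_pos E).le) fun x _ => ?_
  rw [ENNReal.toReal_ofReal]
  · split_ifs
    · exact min_le_left _ _
    · exact min_le_right _ _
  · split_ifs
    · exact E.hp0.le
    · linarith [E.hp1]

lemma point (E : EastProcess) (F : CF) (a x0 : ℤ) (hax : a ≤ x0) (ω : Config) :
    |F ω| ≤ Real.exp (Bc E * (x0 - a)) * N2 E (compC (glue a x0 ω) F) := by
  set S := Finset.Ico a x0 with hS
  have hcard : (S.card : ℝ) = (x0 : ℝ) - a := by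
    rw [hS, Int.card_Ico]
    have : ((x0 - a).toNat : ℤ) = x0 - a := Int.toNat_of_nonneg (by omega)
    exact_mod_cast congrArg (fun z : ℤ => (z : ℝ)) this
  set h := compC (glue a x0 ω) F with hh
  have h1 : F ω * F ω * (E.μ (cyl S ω)).toReal ≤ I E (h * h) := by
    have e : F ω * F ω * (E.μ (cyl S ω)).toReal =
        ∫ ζ, (cyl S ω).indicator (fun _ => F ω * F ω) ζ ∂E.μ := by
      rw [integral_indicator_const _ (cyl_meas S ω), smul_eq_mul, mul_comm]; rfl
    rw [e]
    refine integral_mono ((integrable_const _).indicator (cyl_meas S ω)) (intCF _ _) fun ζ => ?_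
    by_cases hζ : ζ ∈ cyl S ω
    · rw [Set.indicator_of_mem hζ]
      have : glue a x0 ω ζ = ω := by
        ext z
        rw [glue_apply]
        split_ifs with hz
        · exact hζ z (Finset.mem_Ico.2 hz)
        · rfl
      simp only [ContinuousMap.mul_apply, hh, compC_apply, this]; exact le_rfl
    · rw [Set.indicator_of_notMem hζ]
      exact mul_self_nonneg _
  have h2 := mu_cyl_lower E S ω
  rw [hcard] at h2
  rw [← N2_sq] at h1
  have h3 : F ω * F ω * Real.exp (-(2 * Bc E * (x0 - a))) ≤ N2 E h * N2 E h :=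
    le_trans (mul_le_mul_of_nonneg_left h2 (mul_self_nonneg _)) h1
  refine abs_le_of_sq_le_sq ?_ (mul_nonneg (Real.exp_pos _).le (apply_nonneg _ _))
  have e4 : Real.exp (-(2 * Bc E * (x0 - a))) *
      (Real.exp (Bc E * (x0 - a)) * Real.exp (Bc E * (x0 - a))) = 1 := by
    rw [← Real.exp_add, ← Real.exp_add, ← Real.exp_zero]; congr 1; ring
  set X := Real.exp (Bc E * (x0 - a))
  set Y := Real.exp (-(2 * Bc E * (x0 - a)))
  have h5 := mul_le_mul_of_nonneg_right h3 (mul_self_nonneg X)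
  calc F ω ^ 2 = F ω * F ω * (Y * (X * X)) := by rw [e4]; ring
    _ = F ω * F ω * Y * (X * X) := by ring
    _ ≤ N2 E h * N2 E h * (X * X) := h5
    _ = _ := by ring

/-- the main relaxation estimate -/
lemma mrd (E : EastProcess) (hgap : 0 < gap E) (a' a b x0 : ℤ) (f : CF)
    (hf : DependsOnF f (Set.Icc a' b)) (hf1 : ‖f‖ ≤ 1) (ha : a' ≤ a) (hax : a ≤ x0)
    (hmean : ∀ y ≥ x0, ∀ ω, I E (compC (glue a y ω) f) = 0) (K : ℝ) (hK : 0 ≤ K)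
    (hgrad : ∀ z ≤ a - 1, ∀ ω b, |f (Function.update ω z b) - f ω| ≤
      K * Real.exp (((a - 1 : ℤ) : ℝ) - z))
    (t : ℝ) (ht : 0 ≤ t) (ω : Config) (hω : ω x0 = false) :
    |Pf E t f ω| ≤ Real.exp (Bc E * (x0 - a) - gap E / 2 * t) + t * (Real.exp (3 * t) * K) := by
  have main : ∀ᶠ n : ℕ in atTop, |Pf E t f ω| ≤ Real.exp (Bc E * (x0 - a) - gap E / 2 * t) +
      t * (Real.exp (3 * t) * (2 * Real.exp (-(n : ℝ)) + K)) := by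
    filter_upwards [eventually_ge_atTop (max b x0 - b).toNat] with n hn
    set N : ℤ := b + n with hN
    have hbN : b ≤ N := by omega
    have h1 := cmp2 E a' b (a - 1) N f hf hbN hf1 K hK hgrad t ht ω
    have h2 := relax E hgap a a' x0 N ha hax (by omega) f hmean t ht ω hω
    have h3 := point E (Sg E.p ((Finset.Icc a' N).erase (a - 1)) t f) a x0 hax ω
    have h4 : |Sg E.p ((Finset.Icc a' N).erase (a - 1)) t f ω| ≤
        Real.exp (Bc E * (x0 - a) - gap E / 2 * t) := by
      refine h3.trans ?_
      rw [show Bc E * ((x0:ℝ) - a) - gap E / 2 * t = Bc E * (x0 - a) + -(gap E / 2 * t) by ring,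
        Real.exp_add]
      gcongr
      refine h2.trans ?_
      have := (Real.exp_pos (-(gap E / 2 * t))).le
      nlinarith
    have h5 : Real.exp ((b : ℝ) - (N + 1)) ≤ Real.exp (-(n : ℝ)) := by
      apply Real.exp_le_exp.2
      rw [hN]; push_cast; linarith
    have h6 : t * (Real.exp (3 * t) * (2 * Real.exp ((b : ℝ) - (N + 1)) + K)) ≤
        t * (Real.exp (3 * t) * (2 * Real.exp (-(n : ℝ)) + K)) := by
      gcongr
    have h1' := abs_le.1 (h1.trans h6)
    have h4' := abs_le.1 h4
    rw [abs_le]; constructor <;> linarith [h1'.1, h1'.2, h4'.1, h4'.2]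
  have hlim : Tendsto (fun n : ℕ => Real.exp (Bc E * (x0 - a) - gap E / 2 * t) +
      t * (Real.exp (3 * t) * (2 * Real.exp (-(n : ℝ)) + K))) atTop
      (𝓝 (Real.exp (Bc E * (x0 - a) - gap E / 2 * t) + t * (Real.exp (3 * t) * (2 * 0 + K)))) := by
    have h0 : Tendsto (fun n : ℕ => Real.exp (-(n : ℝ))) atTop (𝓝 0) :=
      Real.tendsto_exp_neg_atTop_nhds_zero.comp tendsto_natCast_atTop_atTop
    exact tendsto_const_nhds.add (tendsto_const_nhds.mul (tendsto_const_nhds.mul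
      ((tendsto_const_nhds.mul h0).add tendsto_const_nhds)))
  rw [mul_zero, zero_add] at hlim
  exact ge_of_tendsto hlim main

lemma cont_of_dep (f : Config → ℝ) (S : Finset ℤ) (hf : DependsOnF f ↑S) : Continuous f := by
  set ext : (S → Bool) → Config := fun τ x => if hx : x ∈ S then τ ⟨x, hx⟩ else true with hext
  have h1 : f = (fun τ : S → Bool => f (ext τ)) ∘ (fun ω : Config => fun x : S => ω x.1) := by
    funext ω
    refine hf _ _ fun x hx => ?_
    have hx' : x ∈ S := hx
    simp [hext, hx']
  rw [h1]
  refine Continuous.comp continuous_of_discreteTopology ?_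
  exact continuous_pi fun x => continuous_apply x.1

lemma ind_dep {A : Set Config} {S : Set ℤ} (h : DependsOnSet A S) :
    DependsOnF (A.indicator (fun _ => (1 : ℝ))) S := by
  classical
  intro ω ω' hω
  have := h ω ω' hω
  by_cases h1 : ω ∈ A
  · rw [Set.indicator_of_mem h1, Set.indicator_of_mem (this.1 h1)]
  · rw [Set.indicator_of_notMem h1, Set.indicator_of_notMem (fun h2 => h1 (this.2 h2))]

/-- indicator of a cylinder event -/
def indC (A : Set Config) (S : Finset ℤ) (h : DependsOnSet A ↑S) : CF :=
  ⟨A.indicator (fun _ => 1), cont_of_dep _ S (ind_dep h)⟩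

lemma indC_apply (A : Set Config) (S : Finset ℤ) (h : DependsOnSet A ↑S) (ω : Config) :
    indC A S h ω = A.indicator (fun _ => 1) ω := rfl

lemma indC_mem {A : Set Config} {S : Finset ℤ} {h : DependsOnSet A ↑S} {ω : Config} (hω : ω ∈ A) :
    indC A S h ω = 1 := by rw [indC_apply, Set.indicator_of_mem hω]

lemma indC_nmem {A : Set Config} {S : Finset ℤ} {h : DependsOnSet A ↑S} {ω : Config} (hω : ω ∉ A) :
    indC A S h ω = 0 := by rw [indC_apply, Set.indicator_of_notMem hω]

lemma indC_cases (A : Set Config) (S : Finset ℤ) (h : DependsOnSet A ↑S) (ω : Config) :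
    indC A S h ω = 0 ∨ indC A S h ω = 1 := by
  by_cases hω : ω ∈ A
  · exact Or.inr (indC_mem hω)
  · exact Or.inl (indC_nmem hω)

lemma meas_of_dep {A : Set Config} {S : Finset ℤ} (h : DependsOnSet A ↑S) : MeasurableSet A := by
  have : A = (indC A S h) ⁻¹' {1} := by
    ext ω
    simp only [Set.mem_preimage, Set.mem_singleton_iff]
    constructor
    · intro hω; exact indC_mem hω
    · intro h1
      by_contra hω
      rw [indC_nmem hω] at h1
      exact zero_ne_one h1
  rw [this]
  exact (indC A S h).continuous.measurable (measurableSet_singleton _)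

lemma int_indC (m : Measure Config) {A : Set Config} {S : Finset ℤ}
    (h : DependsOnSet A ↑S) : ∫ ω, indC A S h ω ∂m = m.real A := by
  change ∫ ω, A.indicator (fun _ => (1 : ℝ)) ω ∂m = _
  rw [integral_indicator_const _ (meas_of_dep h)]; simp

lemma indC_norm (A : Set Config) (S : Finset ℤ) (h : DependsOnSet A ↑S) : ‖indC A S h‖ ≤ 1 := by
  refine (ContinuousMap.norm_le _ zero_le_one).2 fun ω => ?_
  rcases indC_cases A S h ω with h | h <;> rw [h] <;> simp

/-- the event that the site `x` is empty -/
def zeroAt (x : ℤ) : Set Config := {ω | ω x = false}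

lemma zeroAt_dep (x : ℤ) : DependsOnSet (zeroAt x) ↑({x} : Finset ℤ) := by
  intro ω ω' h
  have := h x (by simp)
  simp [zeroAt, this]

lemma Pf_zeroAt (E : EastProcess) (t : ℝ) (ht : 0 ≤ t) (ω : Config) (hω : ∀ z < 0, ω z = true)
    (x : ℤ) : (E.P t ω).real (zeroAt x) ≤ Real.exp (3 * t + x) := by
  set f := indC (zeroAt x) _ (zeroAt_dep x) with hf
  have hdep : DependsOnF f (Set.Icc x x) := by
    have := ind_dep (zeroAt_dep x)
    rw [Finset.coe_singleton, ← Set.Icc_self] at this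
    exact this
  have e : Pf E t f ω = (E.P t ω).real (zeroAt x) := int_indC _ _
  rw [← e]
  have main : ∀ n : ℕ, Pf E t f ω ≤ Real.exp (3 * t + x) +
      t * (Real.exp (3 * t) * (2 * Real.exp (-(n : ℝ)) + 0)) := by
    intro n
    have h1 := cmp2 E x x (x - 1) (x + n) f hdep (by omega) (indC_norm _ _ _) 0 le_rfl (by
      intro z hz ω b
      rw [dep_update hdep (by simp; omega)]
      simp) t ht ω
    have h2 := front_bound E.hp0.le E.hp1.le ((Finset.Icc x (x + n)).erase (x - 1)) x f (by
      intro u ω hω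
      by_cases hxu : x < u
      · rw [hf, indC_nmem (by simp [zeroAt, hω x hxu])]
        simp; positivity
      · have h3 : 1 ≤ Real.exp ((x : ℝ) - u) := Real.one_le_exp (by
          have : (u : ℝ) ≤ x := by exact_mod_cast not_lt.1 hxu
          linarith)
        refine le_trans ?_ h3
        exact (f.norm_coe_le_norm ω).trans (indC_norm _ _ _)) t ht 0 ω hω
    rw [← Real.exp_add] at h2
    have h5 : Real.exp ((x : ℝ) - ((x + n : ℤ) + 1)) ≤ Real.exp (-(n : ℝ)) := by
      apply Real.exp_le_exp.2
      push_cast; linarith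
    have h6 : t * (Real.exp (3 * t) * (2 * Real.exp ((x : ℝ) - ((x + n : ℤ) + 1)) + 0)) ≤
        t * (Real.exp (3 * t) * (2 * Real.exp (-(n : ℝ)) + 0)) := by
      gcongr
    have h1' := (abs_le.1 (h1.trans h6)).2
    have h2' := (abs_le.1 h2).2
    have h7 : Real.exp (3 * t + (x - (0 : ℤ))) = Real.exp (3 * t + x) := by simp
    rw [h7] at h2'
    linarith
  have hlim : Tendsto (fun n : ℕ => Real.exp (3 * t + x) +
      t * (Real.exp (3 * t) * (2 * Real.exp (-(n : ℝ)) + 0))) atTop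
      (𝓝 (Real.exp (3 * t + x) + t * (Real.exp (3 * t) * (2 * 0 + 0)))) := by
    have h0 : Tendsto (fun n : ℕ => Real.exp (-(n : ℝ))) atTop (𝓝 0) :=
      Real.tendsto_exp_neg_atTop_nhds_zero.comp tendsto_natCast_atTop_atTop
    exact tendsto_const_nhds.add (tendsto_const_nhds.mul (tendsto_const_nhds.mul
      ((tendsto_const_nhds.mul h0).add tendsto_const_nhds)))
  simp only [mul_zero, add_zero] at hlim
  refine ge_of_tendsto hlim (Eventually.of_forall ?_)
  intro n
  have := main n
  simpa using this

/-- there is a zero to the left of `y` -/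
def zeroBelow (y : ℤ) : Set Config := {ω | ∃ x < y, ω x = false}

lemma zeroBelow_eq (y : ℤ) : zeroBelow y = ⋃ n : ℕ, zeroAt (y - 1 - n) := by
  ext ω
  simp only [zeroBelow, zeroAt, Set.mem_setOf_eq, Set.mem_iUnion]
  constructor
  · rintro ⟨x, hx, h⟩
    refine ⟨(y - 1 - x).toNat, ?_⟩
    rwa [Int.toNat_of_nonneg (by omega), show y - 1 - (y - 1 - x) = x by ring]
  · rintro ⟨n, h⟩
    exact ⟨_, by omega, h⟩

lemma zeroBelow_meas (y : ℤ) : MeasurableSet (zeroBelow y) := by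
  rw [zeroBelow_eq]
  exact MeasurableSet.iUnion fun n => meas_of_dep (zeroAt_dep _)

/-- finite speed of propagation of the front -/
lemma fs (E : EastProcess) (t : ℝ) (ht : 0 ≤ t) (ω : Config) (hω : ∀ z < 0, ω z = true) (y : ℤ) :
    (E.P t ω) (zeroBelow y) ≤ ENNReal.ofReal (Real.exp (3 * t + y)) := by
  rw [zeroBelow_eq]
  refine (measure_iUnion_le _).trans ?_
  have h1 : ∀ n : ℕ, (E.P t ω) (zeroAt (y - 1 - n)) ≤
      ENNReal.ofReal (Real.exp (3 * t + y) * ((Real.exp (-1)) ^ (n + 1))) := by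
    intro n
    have := Pf_zeroAt E t ht ω hω (y - 1 - n)
    rw [← ofReal_measureReal (μ := E.P t ω)]
    refine ENNReal.ofReal_le_ofReal (this.trans (le_of_eq ?_))
    rw [← Real.exp_nat_mul, ← Real.exp_add]
    push_cast; congr 1; ring
  have e1 : Real.exp (-1) < 1 / 2 := by
    rw [Real.exp_neg, ← one_div]
    have := Real.add_one_lt_exp (one_ne_zero)
    exact one_div_lt_one_div_of_lt (by norm_num) (by linarith)
  have e0 := Real.exp_pos (-1)
  refine (ENNReal.tsum_le_tsum h1).trans ?_
  have hs : HasSum (fun n : ℕ => Real.exp (3 * t + y) * ((Real.exp (-1)) ^ (n + 1)))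
      (Real.exp (3 * t + y) * (Real.exp (-1) * (1 - Real.exp (-1))⁻¹)) := by
    refine HasSum.mul_left _ ?_
    simp_rw [pow_succ']
    exact (hasSum_geometric_of_lt_one e0.le (by linarith)).mul_left _
  rw [← ENNReal.ofReal_tsum_of_nonneg (fun n => by positivity) hs.summable, hs.tsum_eq]
  apply ENNReal.ofReal_le_ofReal
  have h3 : Real.exp (-1) * (1 - Real.exp (-1))⁻¹ ≤ 1 := by
    rw [← div_eq_mul_inv, div_le_one (by linarith)]; linarith
  have := Real.exp_pos (3 * t + y)
  nlinarith

end EastAux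

namespace EastAux

/-- all sites of `[u, u+l)` are occupied -/
def ones (u : ℤ) (l : ℕ) : Set Config := {ω | ∀ x, u ≤ x → x < u + l → ω x = true}

lemma ones_dep (u : ℤ) (l : ℕ) : DependsOnSet (ones u l) ↑(Finset.Ico u (u + l)) := by
  intro ω ω' h
  constructor
  · intro h1 x hx hx'
    rw [← h x (by simp [hx, hx'])]; exact h1 x hx hx'
  · intro h1 x hx hx'
    rw [h x (by simp [hx, hx'])]; exact h1 x hx hx'

lemma ones_meas (u : ℤ) (l : ℕ) : MeasurableSet (ones u l) := meas_of_dep (ones_dep u l)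

lemma mu_ones (E : EastProcess) (u : ℤ) (l : ℕ) : E.μ.real (ones u l) = E.p ^ l := by
  have h : ones u l = cyl (Finset.Ico u (u + l)) (fun _ => true) := by
    ext ω; simp [ones, cyl]
  rw [h, Measure.real, mu_cyl]
  simp [ENNReal.toReal_ofReal E.hp0.le]

lemma Z1 (E : EastProcess) (hgap : 0 < gap E) (t : ℝ) (ht : 0 ≤ t) (ω : Config) (hω : ω 0 = false)
    (u : ℤ) (l : ℕ) (hu : u + l ≤ 0) :
    (E.P t ω) (ones u l) ≤ ENNReal.ofReal (E.p ^ l + Real.exp (Bc E * (-u) - gap E / 2 * t)) := by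
  set g := indC (ones u l) _ (ones_dep u l) with hg
  set f : CF := g - (E.p ^ l) • (1 : CF) with hf
  have hgd : DependsOnF g ↑(Finset.Ico u (u + l)) := ind_dep (ones_dep u l)
  have hp1 : E.p ^ l ≤ 1 := pow_le_one₀ E.hp0.le E.hp1.le
  have hp0 : 0 ≤ E.p ^ l := pow_nonneg E.hp0.le l
  have hfd : DependsOnF f (Set.Icc u (u + l)) := by
    intro ω ω' h
    have := hgd ω ω' fun x hx => h x (by simp at hx; exact ⟨hx.1, hx.2.le⟩)
    simp [hf, this]
  have hfn : ‖f‖ ≤ 1 := by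
    refine (ContinuousMap.norm_le _ zero_le_one).2 fun ω => ?_
    rw [Real.norm_eq_abs, abs_le]
    have e : f ω = g ω - E.p ^ l := by simp [hf]
    rw [e]
    rcases indC_cases (ones u l) _ (ones_dep u l) ω with h | h <;> rw [hg, h] <;>
      constructor <;> linarith
  have h1 := mrd E hgap u u (u + l) 0 f hfd hfn le_rfl (by omega) (by
    intro y hy ω
    have e : compC (glue u y ω) f = f := by
      ext ζ
      rw [compC_apply]
      have := hgd (glue u y ω ζ) ζ fun x hx => by
        simp at hx
        exact glue_in _ _ ⟨hx.1, by omega⟩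
      simp [hf, this]
    rw [e, hf, I_sub, I_smul]
    have e1 : I E (1 : CF) = 1 := by simp [I]
    have e2 : I E g = E.p ^ l := by
      rw [← mu_ones E u l]; exact int_indC _ _
    rw [e1, e2]; ring) 0 le_rfl (by
    intro z hz ω b
    rw [dep_update hfd (by simp; omega)]
    simp) t ht ω hω
  have e : Pf E t f ω = (E.P t ω).real (ones u l) - E.p ^ l := by
    rw [hf, Pf_sub, Pf_smul]
    have e1 : Pf E t (1 : CF) ω = 1 := by simp [Pf]
    have e2 : Pf E t g ω = (E.P t ω).real (ones u l) := int_indC _ _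
    rw [e1, e2]; ring
  rw [e] at h1
  have h2 := (abs_le.1 h1).2
  rw [← ofReal_measureReal (μ := E.P t ω)]
  apply ENNReal.ofReal_le_ofReal
  simp only [Int.cast_zero, zero_sub, mul_zero, add_zero] at h2
  linarith

/-- front at `j` -/
def H (j : ℤ) : Set Config := {ω | ω j = false ∧ ∀ x < j, ω x = true}

lemma H_meas (j : ℤ) : MeasurableSet (H j) := by
  have : H j = zeroAt j ∩ (zeroBelow j)ᶜ := by
    ext ω; simp [H, zeroAt, zeroBelow]
  rw [this]
  exact (meas_of_dep (zeroAt_dep j)).inter (zeroBelow_meas j).compl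

lemma front_H {j : ℤ} {ω : Config} (h : ω ∈ H j) : front ω = j := by
  refine IsLeast.csInf_eq ⟨h.1, fun x hx => ?_⟩
  by_contra hc
  have := h.2 x (not_le.1 hc)
  rw [Set.mem_setOf_eq, this] at hx
  exact Bool.noConfusion hx

lemma LO_H {ω : Config} (h : ω ∈ LO) : ∃ j, ω ∈ H j := by
  obtain ⟨⟨y, hy⟩, x, hx⟩ := h
  obtain ⟨j, hj, hj'⟩ := Int.exists_least_of_bdd (P := fun x => ω x = false)
    ⟨y, fun z hz => by
      by_contra hc
      have := hy z (not_le.1 hc)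
      rw [this] at hz
      exact Bool.noConfusion hz⟩ ⟨x, hx⟩
  refine ⟨j, hj, fun x hx => ?_⟩
  by_contra hc
  have := hj' x (by simpa using hc)
  omega

lemma LO_eq : LO = ⋃ j, H j := by
  ext ω
  rw [Set.mem_iUnion]
  exact ⟨LO_H, fun ⟨j, h⟩ => ⟨⟨j, h.2⟩, j, h.1⟩⟩

lemma LO_meas : MeasurableSet LO := by
  rw [LO_eq]; exact MeasurableSet.iUnion H_meas

lemma LO0_eq : LO₀ = H 0 := by
  ext ω
  constructor
  · rintro ⟨h, h0⟩
    obtain ⟨j, hj⟩ := LO_H h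
    rw [front_H hj] at h0
    rwa [← h0]
  · intro h
    exact ⟨LO_eq ▸ Set.mem_iUnion.2 ⟨0, h⟩, front_H h⟩

lemma theta_H {j : ℤ} {ω : Config} (h : ω ∈ H j) : θL 0 ω = shift j ω := by
  funext x
  unfold θL shift
  rw [front_H h]
  split_ifs with h1 h2
  · exact (h.2 _ (by omega)).symm
  · rw [h2, zero_add]; exact h.1.symm
  · congr 1; ring

lemma shift_cont (y : ℤ) : Continuous (shift y) :=
  continuous_pi fun x => continuous_apply (x + y)

/-- the law at time `s` started from `ν` -/
def law (E : EastProcess) (s : ℝ) (ν : Measure Config) : Measure Config := ν.bind (E.P s)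

lemma law_apply (E : EastProcess) (s : ℝ) (ν : Measure Config) {A : Set Config}
    (hA : MeasurableSet A) : law E s ν A = ∫⁻ ω, E.P s ω A ∂ν :=
  Measure.bind_apply hA (E.P s).measurable.aemeasurable

instance law_prob (E : EastProcess) (s : ℝ) (ν : Measure Config) [IsProbabilityMeasure ν] :
    IsProbabilityMeasure (law E s ν) := by
  constructor
  rw [law_apply _ _ _ MeasurableSet.univ]
  simp

lemma law_law (E : EastProcess) (s t : ℝ) (hs : 0 ≤ s) (ht : 0 ≤ t) (ν : Measure Config) :
    law E (t + s) ν = law E s (law E t ν) := by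
  unfold law
  rw [E.semigroup s t hs ht]
  exact Measure.comp_assoc.symm

lemma law_le (E : EastProcess) (s : ℝ) (ν : Measure Config) [IsProbabilityMeasure ν] {A : Set Config}
    (hA : MeasurableSet A) (c : ENNReal) (h : ∀ᵐ ω ∂ν, E.P s ω A ≤ c) : law E s ν A ≤ c := by
  rw [law_apply _ _ _ hA]
  refine (lintegral_mono_ae h).trans ?_
  simp

/-- the standing assumptions on `ν` -/
structure Inv (E : EastProcess) (ν : Measure Config) : Prop where
  prob : IsProbabilityMeasure ν
  h0 : ∀ᵐ ω ∂ν, ω ∈ H 0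
  inv : ∀ t : ℝ, 0 ≤ t → Measure.map (θL 0) (law E t ν) = ν

lemma Inv.mk' (E : EastProcess) (ν : Measure Config) (hν : IsProbabilityMeasure ν) (hν0 : ν LO₀ = 1)
    (hinv : ∀ t : ℝ, 0 ≤ t → Qt E t ν = ν) : Inv E ν := by
  refine ⟨hν, ?_, hinv⟩
  rw [LO0_eq] at hν0
  exact (prob_compl_eq_zero_iff (H_meas 0)).2 hν0

lemma Inv.lo {E : EastProcess} {ν : Measure Config} (h : Inv E ν) (t : ℝ) (ht : 0 ≤ t) :
    ∀ᵐ ω ∂(law E t ν), ω ∈ LO := by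
  haveI := h.prob
  change law E t ν LOᶜ = 0
  refine le_antisymm (law_le _ _ _ LO_meas.compl _ ?_) bot_le
  filter_upwards [h.h0] with ω hω
  exact ((prob_compl_eq_zero_iff LO_meas).2
    (E.loStable t ht ω (LO_eq ▸ Set.mem_iUnion.2 ⟨0, hω⟩))).le

lemma Inv.aem {E : EastProcess} {ν : Measure Config} (h : Inv E ν) (t : ℝ) (ht : 0 ≤ t) :
    AEMeasurable (θL 0) (law E t ν) := by
  haveI := h.prob
  by_contra hc
  have := h.inv t ht
  rw [Measure.map_of_not_aemeasurable hc] at this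
  exact (IsProbabilityMeasure.ne_zero ν) this.symm

lemma Inv.zeroBelow {E : EastProcess} {ν : Measure Config} (h : Inv E ν) (t : ℝ) (ht : 0 ≤ t) (y : ℤ) :
    law E t ν (zeroBelow y) ≤ ENNReal.ofReal (Real.exp (3 * t + y)) := by
  haveI := h.prob
  refine law_le _ _ _ (zeroBelow_meas y) _ ?_
  filter_upwards [h.h0] with ω hω
  exact fs E t ht ω hω.2 y

lemma Inv.ones {E : EastProcess} (hgap : 0 < gap E) {ν : Measure Config} (h : Inv E ν)
    (t : ℝ) (ht : 0 ≤ t) (u : ℤ) (l : ℕ) (hu : u + l ≤ 0) :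
    law E t ν (ones u l) ≤ ENNReal.ofReal (E.p ^ l + Real.exp (Bc E * (-u) - gap E / 2 * t)) := by
  haveI := h.prob
  refine law_le _ _ _ (ones_meas u l) _ ?_
  filter_upwards [h.h0] with ω hω
  exact Z1 E hgap t ht ω hω.1 u l hu

/-- the front is at `j > -v`, and there is an interval without zeros at distance `y` from it -/
def bset (y : ℤ) (l : ℕ) (v : ℤ) : Set Config := {ω | ∃ j > -v, ω ∈ H j ∧ ω ∈ ones (j + y) l}

lemma bset_meas (y : ℤ) (l : ℕ) (v : ℤ) : MeasurableSet (bset y l v) := by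
  have : bset y l v = ⋃ j : ℤ, ⋃ _ : j > -v, (H j ∩ EastAux.ones (j + y) l) := by
    ext ω; simp only [bset, Set.mem_setOf_eq, Set.mem_iUnion, Set.mem_inter_iff, exists_prop]
  rw [this]
  exact MeasurableSet.iUnion fun j => MeasurableSet.iUnion fun _ => (H_meas j).inter (ones_meas _ _)

lemma shift_H {j k : ℤ} {ω : Config} (h : shift j ω ∈ H k) : ω ∈ H (k + j) := by
  refine ⟨h.1, fun x hx => ?_⟩
  have := h.2 (x - j) (by omega)
  rwa [shift, sub_add_cancel] at this

lemma shift_ones {j u : ℤ} {l : ℕ} {ω : Config} (h : shift j ω ∈ ones u l) : ω ∈ ones (u + j) l := by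
  intro x hx hx'
  have := h (x - j) (by omega) (by omega)
  rwa [shift, sub_add_cancel] at this

lemma bset_shift (y : ℤ) (l : ℕ) (v r j : ℤ) (hj : -r < j) (ω : Config)
    (h : shift j ω ∈ bset y l v) : ω ∈ bset y l (v + r) := by
  obtain ⟨k, hk, h1, h2⟩ := h
  refine ⟨k + j, by omega, shift_H h1, ?_⟩
  have := shift_ones h2
  rwa [show k + j + y = k + y + j by ring]

lemma zs1 {E : EastProcess} {ν : Measure Config} (h : Inv E ν) (s : ℝ) (hs : 0 ≤ s) (y : ℤ)
    (l : ℕ) (v : ℤ) :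
    ν (ones y l) ≤ law E s ν (bset y l v) + ENNReal.ofReal (Real.exp (3 * s + (-v + 1 : ℤ))) := by
  conv_lhs => rw [← h.inv s hs]
  rw [Measure.map_apply_of_aemeasurable (h.aem s hs) (ones_meas y l)]
  refine le_trans (measure_mono_ae (t := bset y l v ∪ EastAux.zeroBelow (-v + 1)) ?_)
    ((measure_union_le _ _).trans (add_le_add le_rfl (h.zeroBelow s hs _)))
  filter_upwards [h.lo s hs] with ω hω hω1
  obtain ⟨j, hj⟩ := LO_H hω
  have hω1 : θL 0 ω ∈ EastAux.ones y l := hω1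
  rw [theta_H hj] at hω1
  by_cases hv : j > -v
  · left
    refine ⟨j, hv, hj, ?_⟩
    rw [add_comm]
    exact shift_ones hω1
  · right
    exact ⟨j, by omega, hj.1⟩

lemma zs2 {E : EastProcess} {ν : Measure Config} (h : Inv E ν) (s τ : ℝ) (hs : 0 ≤ s) (hτ : 0 ≤ τ)
    (y : ℤ) (l : ℕ) (v r : ℤ) :
    law E s ν (bset y l v) ≤ ENNReal.ofReal (Real.exp (3 * τ + (-r + 1 : ℤ))) +
      law E (τ + s) ν (bset y l (v + r)) := by
  conv_lhs => rw [← h.inv τ hτ]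
  rw [law_apply _ _ _ (bset_meas y l v), lintegral_map' ((E.P s).measurable_coe
    (bset_meas y l v)).aemeasurable (h.aem τ hτ), law_law E s τ hs hτ,
    law_apply E s _ (bset_meas y l (v + r))]
  have h1 := h.zeroBelow τ hτ (-r + 1)
  refine le_trans ?_ (add_le_add h1 le_rfl)
  rw [← lintegral_indicator_one (zeroBelow_meas _), ← lintegral_add_left
    (measurable_one.indicator (zeroBelow_meas _))]
  refine lintegral_mono_ae ?_
  filter_upwards [h.lo τ hτ] with ω hω
  obtain ⟨j, hj⟩ := LO_H hω
  by_cases hr : -r < j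
  · refine le_trans ?_ le_add_self
    rw [theta_H hj, E.shiftComm s hs j ω, Measure.map_apply (shift_cont j).measurable
      (bset_meas y l v)]
    exact measure_mono fun ω' h' => bset_shift y l v r j hr ω' h'
  · refine le_trans ?_ le_self_add
    rw [Set.indicator_of_mem (show ω ∈ EastAux.zeroBelow (-r + 1) from ⟨j, by omega, hj.1⟩)]
    exact prob_le_one

lemma zs2' {E : EastProcess} (hgap : 0 < gap E) {ν : Measure Config} (h : Inv E ν) (s τ : ℝ)
    (hs : 0 ≤ s) (hτ : 0 ≤ τ) (y : ℤ) (l : ℕ) (r : ℕ) :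
    law E s ν (bset y l (y + l)) ≤ law E (τ + s) ν (bset y l (y + l)) +
     (ENNReal.ofReal (Real.exp (3 * τ + (-r + 1 : ℤ))) +
      r * ENNReal.ofReal (E.p ^ l + Real.exp (Bc E * (l + r) - gap E / 2 * (τ + s)))) := by
  refine (zs2 h s τ hs hτ y l (y + l) r).trans ?_
  rw [add_comm, add_comm (ENNReal.ofReal (Real.exp (3 * τ + (-r + 1 : ℤ)))) (_ * _), ← add_assoc]
  refine add_le_add ?_ le_rfl
  have hsub : bset y l (y + l + r) ⊆ bset y l (y + l) ∪
      ⋃ j ∈ Finset.Ioc (-(y + l) - r) (-(y + l)), EastAux.ones (j + y) l := by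
    rintro ω ⟨j, hj, h1, h2⟩
    by_cases hv : j > -(y + l)
    · exact Or.inl ⟨j, hv, h1, h2⟩
    · right
      simp only [Set.mem_iUnion]
      exact ⟨j, by rw [Finset.mem_Ioc]; omega, h2⟩
  refine (measure_mono hsub).trans ((measure_union_le _ _).trans (add_le_add le_rfl ?_))
  refine (measure_biUnion_finset_le _ _).trans ?_
  refine (Finset.sum_le_card_nsmul _ _ (ENNReal.ofReal (E.p ^ l + Real.exp (Bc E * (l + r)
    - gap E / 2 * (τ + s)))) ?_).trans ?_
  · intro j hj
    rw [Finset.mem_Ioc] at hj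
    refine (h.ones hgap (τ + s) (by linarith) (j + y) l (by omega)).trans ?_
    apply ENNReal.ofReal_le_ofReal
    have hB := Bc_nonneg E
    have : -((j + y : ℤ) : ℝ) ≤ l + r := by
      have : -(j + y : ℤ) ≤ (l : ℤ) + r := by omega
      exact_mod_cast this
    gcongr
  · rw [Int.card_Ioc, nsmul_eq_mul]
    simp

lemma zs3 {E : EastProcess} (hgap : 0 < gap E) {ν : Measure Config} (h : Inv E ν) (T : ℝ)
    (hT : 0 ≤ T) (y : ℤ) (l : ℕ) (hy : 0 ≤ y) :
    law E T ν (bset y l (y + l)) ≤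
      ENNReal.ofReal (E.p ^ l + Real.exp (Bc E * (y + 2 * l) - gap E / 2 * T)) := by
  have hsub : bset y l (y + l) ⊆ EastAux.ones (-(y + 2 * l)) l := by
    rintro ω ⟨j, hj, h1, h2⟩ x hx hx'
    exact h1.2 x (by omega)
  refine (measure_mono hsub).trans ((h.ones hgap T hT _ l (by omega)).trans ?_)
  push_cast
  rw [neg_neg]

end EastAux

namespace EastAux

/-- the basic rate -/
def kap (E : EastProcess) : ℝ := max E.p (Real.exp (-(1 / 2)))

lemma kap_pos (E : EastProcess) : 0 < kap E := lt_max_of_lt_left E.hp0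
lemma kap_lt (E : EastProcess) : kap E < 1 :=
  max_lt E.hp1 (by rw [Real.exp_lt_one_iff]; norm_num)
lemma kap_p (E : EastProcess) (l : ℕ) : E.p ^ l ≤ kap E ^ l :=
  pow_le_pow_left₀ E.hp0.le (le_max_left _ _) l
lemma kap_half (E : EastProcess) (l : ℕ) : Real.exp (-(l / 2 : ℝ)) ≤ kap E ^ l := by
  have : Real.exp (-(l / 2 : ℝ)) = Real.exp (-(1 / 2)) ^ l := by
    rw [← Real.exp_nat_mul]; congr 1; ring
  rw [this]
  exact pow_le_pow_left₀ (Real.exp_pos _).le (le_max_right _ _) l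
lemma kap_exp (E : EastProcess) (l : ℕ) (z : ℝ) (hz : z ≤ -(l / 2 : ℝ)) : Real.exp z ≤ kap E ^ l :=
  (Real.exp_le_exp.2 hz).trans (kap_half E l)
lemma kap_exp1 (E : EastProcess) (l : ℕ) (z : ℝ) (hz : z ≤ -(l / 2 : ℝ) + 1) :
    Real.exp z ≤ 3 * kap E ^ l := by
  have h1 : Real.exp z ≤ Real.exp (-(l / 2 : ℝ)) * Real.exp 1 := by
    rw [← Real.exp_add]; exact Real.exp_le_exp.2 hz
  have h2 := kap_half E l
  have h3 := Real.exp_one_lt_d9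
  have h4 := Real.exp_pos (-(l / 2 : ℝ))
  nlinarith

lemma zs_iter {E : EastProcess} (hgap : 0 < gap E) {ν : Measure Config} (h : Inv E ν) (n0 : ℕ)
    (hn0 : 2 * Bc E + 1 ≤ gap E / 2 * (n0 / 6)) (l : ℕ) (y : ℤ) (n : ℕ) :
    law E (n0 * (l / 6)) ν (bset y l (y + l)) ≤ law E ((n0 + n) * (l / 6)) ν (bset y l (y + l)) +
      n * ENNReal.ofReal (3 * kap E ^ l + l * (2 * kap E ^ l)) := by
  induction n with
  | zero => simp
  | succ n ih =>
    refine ih.trans ?_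
    have h1 := zs2' hgap h ((n0 + n) * (l / 6)) (l / 6) (by positivity) (by positivity) y l l
    have hk := pow_pos (kap_pos E) l
    have h2 : ENNReal.ofReal (Real.exp (3 * ((l : ℝ) / 6) + (-(l : ℤ) + 1 : ℤ))) +
      l * ENNReal.ofReal (E.p ^ l + Real.exp (Bc E * (l + l) -
        gap E / 2 * ((l : ℝ) / 6 + (n0 + n) * (l / 6)))) ≤
        ENNReal.ofReal (3 * kap E ^ l + l * (2 * kap E ^ l)) := by
      rw [ENNReal.ofReal_add (p := 3 * kap E ^ l) (by positivity) (by positivity),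
        ENNReal.ofReal_mul (p := l) (by positivity),
        ENNReal.ofReal_natCast]
      gcongr
      · apply kap_exp1
        push_cast; linarith
      · have e1 := kap_p E l
        have e2 : Real.exp (Bc E * (l + l) - gap E / 2 * ((l : ℝ) / 6 + (n0 + n) * (l / 6))) ≤
            kap E ^ l := by
          apply kap_exp
          have hl : (0 : ℝ) ≤ l := by positivity
          have e3 := mul_le_mul_of_nonneg_left hn0 hl
          have e4 : 0 ≤ gap E / 2 * ((l : ℝ) / 6 + n * (l / 6)) := by positivity
          nlinarith
        linarith
    have e : (n0 + (n + 1 : ℕ) : ℝ) * ((l : ℝ) / 6) = (l / 6 : ℝ) + (n0 + n) * (l / 6) := by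
      push_cast; ring
    rw [e]
    calc _ ≤ (law E ((l / 6 : ℝ) + (n0 + n) * (l / 6)) ν (bset y l (y + l)) +
          ENNReal.ofReal (3 * kap E ^ l + l * (2 * kap E ^ l))) +
          n * ENNReal.ofReal (3 * kap E ^ l + l * (2 * kap E ^ l)) := by
          refine add_le_add (h1.trans (add_le_add le_rfl h2)) le_rfl
      _ = _ := by push_cast; ring

lemma zs (E : EastProcess) (hgap : 0 < gap E) (n0 R : ℕ)
    (hn0 : 2 * Bc E + 1 ≤ gap E / 2 * (n0 / 6)) : ∃ C : ℝ, 0 ≤ C ∧ ∀ ν : Measure Config, Inv E ν →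
    ∀ (l : ℕ) (y : ℤ), (n0 * l : ℤ) ≤ 2 * y → y ≤ (R * l : ℤ) →
      ν.real (ones y l) ≤ C * (1 + l) * kap E ^ l := by
  obtain ⟨n, hn⟩ := exists_nat_gt ((Bc E * (R + 2) + 1) / (gap E / 2 / 6))
  rw [div_lt_iff₀ (by positivity)] at hn
  refine ⟨5 + 3 * n, by positivity, fun ν h l y hy1 hy2 => ?_⟩
  have hk := pow_pos (kap_pos E) l
  have hB := Bc_nonneg E
  have hy1' : (n0 * l : ℝ) ≤ 2 * y := by exact_mod_cast hy1
  have hy2' : (y : ℝ) ≤ R * l := by exact_mod_cast hy2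
  have hl : (0 : ℝ) ≤ l := by positivity
  have h1 := zs1 h (n0 * (l / 6)) (by positivity) y l (y + l)
  have h2 := zs_iter hgap h n0 hn0 l y n
  have h3 := zs3 hgap h ((n0 + n) * (l / 6)) (by positivity) y l (by
    have : (0 : ℤ) ≤ n0 * l := by positivity
    omega)
  have h4 : ENNReal.ofReal (E.p ^ l + Real.exp (Bc E * (y + 2 * l) -
      gap E / 2 * ((n0 + n) * (l / 6)))) ≤ ENNReal.ofReal (2 * kap E ^ l) := by
    apply ENNReal.ofReal_le_ofReal
    have e1 := kap_p E l
    have e2 : Real.exp (Bc E * (y + 2 * l) - gap E / 2 * ((n0 + n) * (l / 6))) ≤ kap E ^ l := by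
      apply kap_exp
      have e3 := mul_le_mul_of_nonneg_left hn.le hl
      have e4 := mul_le_mul_of_nonneg_left hy2' hB
      have e5 : 0 ≤ gap E / 2 * ((n0 : ℝ) * (l / 6)) := by positivity
      nlinarith
    linarith
  have h5 : ENNReal.ofReal (Real.exp (3 * (n0 * (l / 6)) + (-(y + l) + 1 : ℤ))) ≤
      ENNReal.ofReal (3 * kap E ^ l) := by
    apply ENNReal.ofReal_le_ofReal
    apply kap_exp1
    push_cast; linarith
  have h6 : ν (ones y l) ≤ ENNReal.ofReal ((2 * kap E ^ l) +
      n * (3 * kap E ^ l + l * (2 * kap E ^ l)) + 3 * kap E ^ l) := by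
    rw [ENNReal.ofReal_add (by positivity) (by positivity),
      ENNReal.ofReal_add (by positivity) (by positivity), ENNReal.ofReal_mul (by positivity) (p := n),
        ENNReal.ofReal_natCast]
    exact h1.trans (add_le_add (h2.trans (add_le_add (h3.trans h4) le_rfl)) h5)
  have h7 := ENNReal.toReal_le_of_le_ofReal (by positivity) h6
  refine h7.trans ?_
  have : (0 : ℝ) ≤ n * l * kap E ^ l := by positivity
  have : (0 : ℝ) ≤ l * kap E ^ l := by positivity
  nlinarith

end EastAux

namespace EastAux

/-- the front, seen from `-r`, is at `j` -/
def hset (r : ℕ) (j : ℤ) : Set Config := {ω | ω j = false ∧ ∀ x, -(r : ℤ) ≤ x → x < j → ω x = true}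

lemma hset_dep (r : ℕ) (j : ℤ) (hj : -(r : ℤ) ≤ j) :
    DependsOnSet (hset r j) ↑(Finset.Icc (-(r : ℤ)) j) := by
  have key : ∀ ω ω' : Config, (∀ x ∈ (↑(Finset.Icc (-(r : ℤ)) j) : Set ℤ), ω x = ω' x) →
      ω ∈ hset r j → ω' ∈ hset r j := by
    intro ω ω' h h1
    refine ⟨?_, fun x hx hx' => ?_⟩
    · rw [← h j (by simp [hj])]; exact h1.1
    · rw [← h x (by simp [hx, hx'.le])]; exact h1.2 x hx hx'
  exact fun ω ω' h => ⟨key ω ω' h, key ω' ω fun x hx => (h x hx).symm⟩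

/-- the shift as a continuous map -/
def shiftC (j : ℤ) : C(Config, Config) := ⟨shift j, shift_cont j⟩

lemma shift_upd (j z : ℤ) (ω : Config) (b : Bool) :
    shift j (Function.update ω z b) = Function.update (shift j ω) (z - j) b := by
  funext x
  unfold shift
  by_cases h : x = z - j
  · subst h; simp
  · rw [Function.update_of_ne h, Function.update_of_ne (by omega)]

/-- the observable seen from a front at `j` -/
def gj (f : CF) (r : ℕ) (j : ℤ) (hj : -(r : ℤ) ≤ j) : CF :=
  indC (hset r j) _ (hset_dep r j hj) * compC (shiftC j) f

lemma gj_apply (f : CF) (r : ℕ) (j : ℤ) (hj : -(r : ℤ) ≤ j) (ω : Config) :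
    gj f r j hj ω = indC (hset r j) _ (hset_dep r j hj) ω * f (shift j ω) := rfl

lemma gj_abs (f : CF) (hf1 : ‖f‖ ≤ 1) (r : ℕ) (j : ℤ) (hj : -(r : ℤ) ≤ j) (ω : Config) :
    |gj f r j hj ω| ≤ 1 := by
  rw [gj_apply]
  have h1 : |f (shift j ω)| ≤ 1 := (f.norm_coe_le_norm _).trans hf1
  rcases indC_cases (hset r j) _ (hset_dep r j hj) ω with h | h <;> rw [h] <;> simp [h1]

lemma gj_norm (f : CF) (hf1 : ‖f‖ ≤ 1) (r : ℕ) (j : ℤ) (hj : -(r : ℤ) ≤ j) :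
    ‖gj f r j hj‖ ≤ 1 :=
  (ContinuousMap.norm_le _ zero_le_one).2 fun ω => gj_abs f hf1 r j hj ω

lemma gj_bound (E : EastProcess) (hgap : 0 < gap E) (f : CF) (a b : ℤ) (ha : 1 ≤ a)
    (hfd : DependsOnF f (Set.Icc a b)) (hf1 : ‖f‖ ≤ 1) (hav : av E.p a f = 0)
    (r : ℕ) (j : ℤ) (hj : -(r : ℤ) ≤ j) (x0 : ℤ) (hx0 : a + j + 1 ≤ x0) (t : ℝ) (ht : 0 ≤ t)
    (ω : Config) (hω : ω x0 = false) :
    |Pf E t (gj f r j hj) ω| ≤ Real.exp (Bc E * (x0 - (a + j : ℤ)) - gap E / 2 * t) +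
      t * (Real.exp (3 * t) * (2 * Real.exp (1 - a))) := by
  have hid : DependsOnF (indC (hset r j) _ (hset_dep r j hj)) ↑(Finset.Icc (-(r : ℤ)) j) :=
    ind_dep (hset_dep r j hj)
  have havg : ∀ ω, av E.p (a + j) (gj f r j hj) ω = 0 := by
    intro ω
    have h1 : ∀ b, gj f r j hj (Function.update ω (a + j) b) =
        indC (hset r j) _ (hset_dep r j hj) ω * f (Function.update (shift j ω) a b) := by
      intro b
      rw [gj_apply, dep_update hid (by simp; omega), shift_upd, show a + j - j = a by ring]
    have h2 : av E.p a f (shift j ω) = 0 := by rw [hav]; rfl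
    rw [av_apply] at h2
    rw [av_apply, h1, h1]
    linear_combination (indC (hset r j) _ (hset_dep r j hj) ω) * h2
  refine mrd E hgap (-r) (a + j) (max j (b + j)) x0 (gj f r j hj) ?_ (gj_norm f hf1 r j hj)
    (by omega) (by omega) ?_ (2 * Real.exp (1 - a)) (by positivity) ?_ t ht ω hω
  · intro ω ω' h
    rw [gj_apply, gj_apply, hid ω ω' fun x hx => h x (by
      simp at hx ⊢; omega), hfd (shift j ω) (shift j ω') fun x hx => h (x + j) (by
      simp at hx ⊢; omega)]
  · intro y hy ω
    rw [← I_av E (a + j)]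
    have : av E.p (a + j) (compC (glue (a + j) y ω) (gj f r j hj)) = 0 := by
      ext ζ
      have h := havg (glue (a + j) y ω ζ)
      rw [av_apply, glue_upd_in _ _ _ _ _ ⟨le_rfl, by omega⟩,
        glue_upd_in _ _ _ _ _ ⟨le_rfl, by omega⟩] at h
      rw [av_apply, compC_apply, compC_apply, h]; rfl
    rw [this]; simp [I]
  · intro z hz ω b'
    by_cases hzj : z ≤ j
    · have h1 := abs_le.1 (gj_abs f hf1 r j hj (Function.update ω z b'))
      have h2 := abs_le.1 (gj_abs f hf1 r j hj ω)
      have h3 : |gj f r j hj (Function.update ω z b') - gj f r j hj ω| ≤ 2 := by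
        rw [abs_le]; constructor <;> linarith
      refine h3.trans ?_
      rw [mul_assoc, ← Real.exp_add]
      have : (1 : ℝ) ≤ Real.exp (1 - a + (((a + j - 1 : ℤ) : ℝ) - z)) := by
        apply Real.one_le_exp
        have : (z : ℝ) ≤ j := by exact_mod_cast hzj
        push_cast; linarith
      linarith
    · rw [gj_apply, gj_apply, dep_update hid (by simp; omega), shift_upd,
        dep_update hfd (by simp; omega)]
      simp; positivity

lemma gj_sum (f : CF) (hf1 : ‖f‖ ≤ 1) (r l : ℕ) (ω : Config) (hω : ω ∈ LO) :
    |f (θL 0 ω) - ∑ j : Fin r, gj f r (-(r : ℤ) + j) (by omega) ω| ≤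
      (1 + r) * (zeroBelow (-(r : ℤ)) ∪ ones (-(l : ℤ)) l).indicator (fun _ => (1 : ℝ)) ω := by
  by_cases hb : ω ∈ (zeroBelow (-(r : ℤ)) ∪ ones (-(l : ℤ)) l)
  · rw [Set.indicator_of_mem hb, mul_one]
    have h1 : |f (θL 0 ω)| ≤ 1 := (f.norm_coe_le_norm _).trans hf1
    have h2 : |∑ j : Fin r, gj f r (-(r : ℤ) + j) (by omega) ω| ≤ r := by
      refine (Finset.abs_sum_le_sum_abs _ _).trans ?_
      refine (Finset.sum_le_sum fun j _ => gj_abs f hf1 r _ _ ω).trans ?_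
      simp
    exact (abs_sub _ _).trans (add_le_add h1 h2)
  · rw [Set.indicator_of_notMem hb, mul_zero]
    obtain ⟨k, hk⟩ := LO_H hω
    have hk1 : -(r : ℤ) ≤ k := by
      by_contra hc
      exact hb (Or.inl ⟨k, by omega, hk.1⟩)
    have hk2 : k < 0 := by
      by_contra hc
      refine hb (Or.inr fun x hx hx' => hk.2 x (by omega))
    rw [theta_H hk, Finset.sum_eq_single (⟨(k + r).toNat, by omega⟩ : Fin r)]
    · have e : -(r : ℤ) + (((⟨(k + r).toNat, by omega⟩ : Fin r) : ℕ) : ℤ) = k := by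
        simp; omega
      rw [gj_apply, indC_mem, e]
      · simp
      · rw [e]
        exact ⟨hk.1, fun x _ hx => hk.2 x hx⟩
    · intro j _ hj
      rw [gj_apply, indC_nmem, zero_mul]
      intro hm
      have hne : -(r : ℤ) + j ≠ k := by
        intro h
        apply hj
        ext
        simp; omega
      rcases lt_or_gt_of_ne hne with h | h
      · have := hk.2 _ h
        rw [hm.1] at this
        exact Bool.noConfusion this
      · have := hm.2 k hk1 h
        rw [hk.1] at this
        exact Bool.noConfusion this
    · simp

lemma law_int (E : EastProcess) (t : ℝ) (ν : Measure Config) [IsProbabilityMeasure ν] (f : CF) :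
    ∫ ω, f ω ∂(law E t ν) = ∫ ω, Pf E t f ω ∂ν := by
  have e : law E t ν = ((E.P t).comp (Kernel.const Unit ν)) () := by
    rw [Kernel.comp_apply, Kernel.const_apply]; rfl
  haveI : IsFiniteMeasure (((E.P t).comp (Kernel.const Unit ν)) ()) := by
    rw [← e]; infer_instance
  rw [e, Kernel.integral_comp (intCF _ f), Kernel.const_apply]
  rfl

set_option maxHeartbeats 1000000 in
lemma main_bound (E : EastProcess) (hgap : 0 < gap E) : ∃ (n0 : ℕ) (C : ℝ), 0 ≤ C ∧
    ∀ ν : Measure Config, Inv E ν → ∀ (l : ℕ) (a b : ℤ) (f : CF), 1 ≤ a →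
      DependsOnF f (Set.Icc a b) → ‖f‖ ≤ 1 → av E.p a f = 0 →
      (2 * n0 + 1) * (l : ℤ) ≤ a → a ≤ 2 * (2 * n0 + 1) * (l : ℤ) →
      |∫ ω, f ω ∂ν| ≤ C * (1 + l) ^ 2 * kap E ^ l := by
  have hB := Bc_nonneg E
  obtain ⟨n0, hn⟩ := exists_nat_gt ((2 * Bc E + 1) / (gap E / 2 / 6))
  rw [div_lt_iff₀ (by positivity)] at hn
  have hn0 : 2 * Bc E + 1 ≤ gap E / 2 * (n0 / 6) := by linarith
  have hn1 : 1 ≤ n0 := by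
    by_contra hc
    have : n0 = 0 := by omega
    subst this
    norm_num at hn
    linarith
  have hn1' : (1 : ℝ) ≤ n0 := by exact_mod_cast hn1
  obtain ⟨C, hC, hzs⟩ := zs E hgap n0 (2 * (2 * n0 + 1)) hn0
  refine ⟨n0, 3 * (1 + n0) + n0 * (7 + C), by positivity, ?_⟩
  intro ν h l a b f ha hfd hf1 hav hal hau
  haveI := h.prob
  have hk := pow_pos (kap_pos E) l
  have hl : (0 : ℝ) ≤ l := by positivity
  have hal' : (2 * n0 + 1) * (l : ℝ) ≤ a := by exact_mod_cast hal
  set t : ℝ := n0 * (l / 6) with ht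
  have ht0 : 0 ≤ t := by positivity
  set r : ℕ := n0 * l with hr
  have hexp : Real.exp (Bc E * l - gap E / 2 * t) ≤ kap E ^ l := by
    apply kap_exp
    have e3 := mul_le_mul_of_nonneg_left hn0 hl
    rw [ht]
    nlinarith [mul_nonneg hB hl]
  have hlast : t * (Real.exp (3 * t) * (2 * Real.exp (1 - a))) ≤ 6 * kap E ^ l := by
    have e1 : t ≤ Real.exp t := by linarith [Real.add_one_le_exp t]
    have e2 : t * (Real.exp (3 * t) * (2 * Real.exp (1 - a))) ≤
        Real.exp t * (Real.exp (3 * t) * (2 * Real.exp (1 - a))) := by gcongr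
    have e3 : Real.exp t * (Real.exp (3 * t) * (2 * Real.exp (1 - a))) =
        2 * Real.exp (4 * t + 1 - a) := by
      rw [show 4 * t + 1 - (a : ℝ) = t + (3 * t + (1 - a)) by ring, Real.exp_add, Real.exp_add]
      ring
    have e4 : Real.exp (4 * t + 1 - a) ≤ 3 * kap E ^ l := by
      apply kap_exp1
      rw [ht]
      have : 0 ≤ (n0 : ℝ) * l := by positivity
      nlinarith
    linarith
  -- the bound for each front position
  have hj : ∀ j : Fin r, |∫ ω, gj f r (-(r : ℤ) + j) (by omega) ω ∂(law E t ν)| ≤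
      7 * kap E ^ l + C * (1 + l) * kap E ^ l := by
    intro j
    rw [law_int]
    set y : ℤ := a + (-(r : ℤ) + j) + 1 with hy
    have hjr : (j : ℤ) < r := by exact_mod_cast j.2
    have hrz : (r : ℤ) = n0 * l := by rw [hr]; push_cast; ring
    have hzs' := hzs ν h l y (by
      have : (0 : ℤ) ≤ n0 * l := by positivity
      have h2 : (2 * n0 + 1) * (l : ℤ) = 2 * (n0 * l) + l := by ring
      omega) (by push_cast; omega)
    have hpt : ∀ ω, |Pf E t (gj f r (-(r : ℤ) + j) (by omega)) ω| ≤
        7 * kap E ^ l + indC (ones y l) _ (ones_dep y l) ω := by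
      intro ω
      by_cases ho : ω ∈ ones y l
      · rw [indC_mem ho]
        have := Pf_abs_le E t (gj f r (-(r : ℤ) + j) (by omega)) ω 1
          (fun ω => gj_abs f hf1 r _ _ ω)
        linarith
      · rw [indC_nmem ho]
        have : ∃ x, y ≤ x ∧ x < y + l ∧ ω x = false := by
          by_contra hc
          push Not at hc
          exact ho fun x hx hx' => by simpa using hc x hx hx'
        obtain ⟨x0, hx1, hx2, hx3⟩ := this
        have h1 := gj_bound E hgap f a b ha hfd hf1 hav r (-(r : ℤ) + j) (by omega) x0
          (by omega) t ht0 ω hx3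
        have h2 : Real.exp (Bc E * (x0 - (a + (-(r : ℤ) + j) : ℤ)) - gap E / 2 * t) ≤
            Real.exp (Bc E * l - gap E / 2 * t) := by
          apply Real.exp_le_exp.2
          have : (x0 : ℝ) - (a + (-(r : ℤ) + j) : ℤ) ≤ l := by
            have : x0 - (a + (-(r : ℤ) + j) : ℤ) ≤ l := by omega
            exact_mod_cast this
          gcongr
        linarith
    refine (abs_integral_le_integral_abs).trans ?_
    refine (integral_mono_of_nonneg (Eventually.of_forall fun ω => abs_nonneg _)
      ((integrable_const _).add (intCF _ _)) (Eventually.of_forall hpt)).trans ?_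
    rw [integral_add' (integrable_const _) (intCF _ _), int_indC]
    simp
    exact hzs'
  -- reduction to the front positions
  have hbm : MeasurableSet (zeroBelow (-(r : ℤ)) ∪ ones (-(l : ℤ)) l) :=
    (zeroBelow_meas _).union (ones_meas _ _)
  have hbad : (law E t ν).real (zeroBelow (-(r : ℤ)) ∪ ones (-(l : ℤ)) l) ≤ 3 * kap E ^ l := by
    have h1 : (law E t ν) (zeroBelow (-(r : ℤ)) ∪ ones (-(l : ℤ)) l) ≤
        ENNReal.ofReal (kap E ^ l + 2 * kap E ^ l) := by
      rw [ENNReal.ofReal_add (by positivity) (by positivity)]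
      refine (measure_union_le _ _).trans (add_le_add ((h.zeroBelow t ht0 _).trans ?_)
        ((h.ones hgap t ht0 _ l (by omega)).trans ?_))
      · apply ENNReal.ofReal_le_ofReal
        apply kap_exp
        rw [ht, hr]
        push_cast
        nlinarith
      · apply ENNReal.ofReal_le_ofReal
        have := kap_p E l
        push_cast
        rw [neg_neg]
        linarith
    have := ENNReal.toReal_le_of_le_ofReal (by positivity) h1
    rw [Measure.real]
    linarith
  have hsum : |∫ ω, (∑ j : Fin r, gj f r (-(r : ℤ) + j) (by omega) ω) ∂(law E t ν)| ≤
      r * (7 * kap E ^ l + C * (1 + l) * kap E ^ l) := by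
    rw [integral_finset_sum _ fun j _ => intCF _ _]
    refine (Finset.abs_sum_le_sum_abs _ _).trans ?_
    refine (Finset.sum_le_sum fun j _ => hj j).trans ?_
    rw [Finset.sum_const, Finset.card_univ, Fintype.card_fin, nsmul_eq_mul]
  have e1 : ∫ ω, f ω ∂ν = ∫ ω, f (θL 0 ω) ∂(law E t ν) := by
    conv_lhs => rw [← h.inv t ht0]
    exact integral_map (h.aem t ht0) f.continuous.aestronglyMeasurable
  have hi1 : Integrable (fun ω => f (θL 0 ω)) (law E t ν) := by
    have := intCF ν f
    rw [← h.inv t ht0] at this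
    exact this.comp_aemeasurable (h.aem t ht0)
  have hi2 : Integrable (fun ω => ∑ j : Fin r, gj f r (-(r : ℤ) + j) (by omega) ω) (law E t ν) :=
    integrable_finset_sum _ fun j _ => intCF _ _
  have hdiff : |∫ ω, f (θL 0 ω) ∂(law E t ν) -
      ∫ ω, (∑ j : Fin r, gj f r (-(r : ℤ) + j) (by omega) ω) ∂(law E t ν)| ≤
      (1 + r) * (3 * kap E ^ l) := by
    rw [← integral_sub hi1 hi2]
    refine (abs_integral_le_integral_abs).trans ?_
    refine (integral_mono_of_nonneg (Eventually.of_forall fun ω => abs_nonneg _)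
      (((integrable_const (1 : ℝ)).indicator hbm).const_mul (1 + (r : ℝ))) ?_).trans ?_
    · filter_upwards [h.lo t ht0] with ω hω
      exact gj_sum f hf1 r l ω hω
    · rw [integral_const_mul, integral_indicator_const _ hbm, smul_eq_mul, mul_one]
      gcongr
  rw [e1]
  have hfin := (abs_le.1 hdiff)
  have hfin2 := (abs_le.1 hsum)
  have hrr : (r : ℝ) = n0 * l := by rw [hr]; push_cast; ring
  rw [hrr] at hfin hfin2
  have hcalc : (1 + (n0 : ℝ) * l) * (3 * kap E ^ l) +
      n0 * l * (7 * kap E ^ l + C * (1 + l) * kap E ^ l) ≤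
      (3 * (1 + n0) + n0 * (7 + C)) * (1 + l) ^ 2 * kap E ^ l := by
    have q1 : (1 + (n0 : ℝ) * l) ≤ (1 + n0) * (1 + l) ^ 2 := by nlinarith [mul_nonneg hl hl, mul_nonneg (by positivity : (0 : ℝ) ≤ n0) (mul_nonneg hl hl)]
    have q2 : (n0 : ℝ) * l * (7 + C * (1 + l)) ≤ n0 * (7 + C) * (1 + l) ^ 2 := by
      have : (l : ℝ) * (7 + C * (1 + l)) ≤ (7 + C) * (1 + l) ^ 2 := by
        nlinarith [mul_nonneg hl hl, mul_nonneg hC hl, mul_nonneg hC (mul_nonneg hl hl)]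
      nlinarith
    nlinarith [mul_le_mul_of_nonneg_right q1 hk.le, mul_le_mul_of_nonneg_right q2 hk.le]
  rw [abs_le]
  constructor <;> linarith

end EastAux

namespace EastAux

lemma main_exp (E : EastProcess) (hgap : 0 < gap E) : ∃ ε K : ℝ, 0 < ε ∧ 0 ≤ K ∧
    ∀ ν : Measure Config, Inv E ν → ∀ (a b : ℤ) (f : CF), 1 ≤ a →
      DependsOnF f (Set.Icc a b) → ‖f‖ ≤ 1 → av E.p a f = 0 →
      |∫ ω, f ω ∂ν| ≤ K * Real.exp (-ε * a) := by
  obtain ⟨n0, C, hC, hmain⟩ := main_bound E hgap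
  set ρ := Real.sqrt (kap E) with hρ
  have hk0 := kap_pos E
  have hρ0 : 0 < ρ := Real.sqrt_pos.2 hk0
  have hρ1 : ρ < 1 := by
    rw [hρ, Real.sqrt_lt' one_pos]; simpa using kap_lt E
  have hρ2 : ρ * ρ = kap E := Real.mul_self_sqrt hk0.le
  have htend := tendsto_pow_const_mul_const_pow_of_lt_one 2 hρ0.le hρ1
  obtain ⟨D, hD⟩ := htend.bddAbove_range
  have hD' : ∀ n : ℕ, (n : ℝ) ^ 2 * ρ ^ n ≤ D := fun n => hD ⟨n, rfl⟩
  have hD0 : 0 ≤ D := by simpa using hD' 0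
  have hlog : Real.log ρ < 0 := Real.log_neg hρ0 hρ1
  set R : ℤ := 2 * n0 + 1 with hR
  have hRpos : 0 < R := by omega
  have hRpos' : (0 : ℝ) < R := by exact_mod_cast hRpos
  set ε : ℝ := -Real.log ρ / R with hε
  have hε0 : 0 < ε := div_pos (by linarith) hRpos'
  refine ⟨ε, C * D / kap E + Real.exp (ε * R), hε0, by positivity, ?_⟩
  intro ν h a b f ha hfd hf1 hav
  haveI := h.prob
  by_cases haR : a < R
  · have h1 : |∫ ω, f ω ∂ν| ≤ 1 := abs_integral_le _ _ _ fun ω => (f.norm_coe_le_norm ω).trans hf1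
    have h2 : 1 ≤ Real.exp (ε * R) * Real.exp (-ε * a) := by
      rw [← Real.exp_add]
      apply Real.one_le_exp
      have : (a : ℝ) ≤ R := by exact_mod_cast haR.le
      nlinarith
    have h3 : 0 ≤ C * D / kap E * Real.exp (-ε * a) := by positivity
    linarith
  · obtain ⟨l, hl⟩ : ∃ l : ℕ, (l : ℤ) = a / R :=
      ⟨(a / R).toNat, Int.toNat_of_nonneg (Int.ediv_nonneg (by omega) hRpos.le)⟩
    have hl1 : R * l ≤ a := by rw [hl]; exact Int.mul_ediv_self_le hRpos.ne'
    have hl2 : a < R * (l + 1) := by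
      rw [hl]; have := Int.lt_mul_ediv_self_add (x := a) hRpos
      linarith
    have hl3 : (1 : ℤ) ≤ l := by
      rw [hl]; exact (Int.le_ediv_iff_mul_le hRpos).2 (by omega)
    have h1 := hmain ν h l a b f ha hfd hf1 hav hl1 (by nlinarith)
    have h2 : ρ ^ (l + 1) ≤ Real.exp (-ε * a) := by
      rw [← Real.exp_log (pow_pos hρ0 (l + 1)), Real.log_pow]
      apply Real.exp_le_exp.2
      have : (a : ℝ) ≤ R * (l + 1) := by exact_mod_cast hl2.le
      have h3 := mul_le_mul_of_nonneg_left this hε0.le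
      have h4 : ε * (R * (l + 1)) = -Real.log ρ * (l + 1) := by
        rw [hε]; field_simp
      push_cast
      nlinarith
    have h3 : (1 + l : ℝ) ^ 2 * kap E ^ l ≤ D / kap E * Real.exp (-ε * a) := by
      have e : (1 + l : ℝ) ^ 2 * kap E ^ l =
          (((l + 1 : ℕ) : ℝ) ^ 2 * ρ ^ (l + 1)) / kap E * ρ ^ (l + 1) := by
        have : kap E ^ l * kap E = ρ ^ (l + 1) * ρ ^ (l + 1) := by
          rw [← mul_pow, hρ2, pow_succ]
        field_simp
        push_cast
        linear_combination ((1 : ℝ) + l) ^ 2 * this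
      rw [e]
      have := hD' (l + 1)
      gcongr
    have h4 : 0 ≤ Real.exp (ε * R) * Real.exp (-ε * a) := by positivity
    have h5 := mul_le_mul_of_nonneg_left h3 hC
    calc _ ≤ C * (1 + l) ^ 2 * kap E ^ l := h1
      _ = C * ((1 + l) ^ 2 * kap E ^ l) := by ring
      _ ≤ C * (D / kap E * Real.exp (-ε * a)) := h5
      _ ≤ _ := by
        rw [add_mul]
        have : C * (D / kap E * Real.exp (-ε * a)) = C * D / kap E * Real.exp (-ε * a) := by ring
        linarith

lemma av_av (p : ℝ) (x : ℤ) (f : CF) : av p x (av p x f) = av p x f := by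
  ext ω
  simp only [av_apply, Function.update_idem]
  ring

lemma tele (E : EastProcess) (ν : Measure Config) [IsProbabilityMeasure ν] (ε K : ℝ) (hε : 0 < ε)
    (hK : 0 ≤ K) (h : ∀ (a b : ℤ) (f : CF), 1 ≤ a →
      DependsOnF f (Set.Icc a b) → ‖f‖ ≤ 1 → av E.p a f = 0 →
      |∫ ω, f ω ∂ν| ≤ K * Real.exp (-ε * a)) (n : ℕ) : ∀ (a b : ℤ) (f : CF), 1 ≤ a → b < a + n →
      DependsOnF f (Set.Icc a b) → ‖f‖ ≤ 1 →
      |∫ ω, f ω ∂ν - ∫ ω, f ω ∂E.μ| ≤ 2 * K / (1 - Real.exp (-ε)) * Real.exp (-ε * a) := by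
  have hq : Real.exp (-ε) < 1 := by rw [Real.exp_lt_one_iff]; linarith
  have hq' : 0 < 1 - Real.exp (-ε) := by linarith
  induction n with
  | zero =>
    intro a b f ha hb hfd hf1
    have hc : ∀ ω, f ω = f (fun _ => true) := fun ω => hfd _ _ fun x hx => by
      simp at hx hb; omega
    simp_rw [hc]
    simp
    positivity
  | succ n ih =>
    intro a b f ha hb hfd hf1
    have hfa : ∀ ω, |f ω| ≤ 1 := fun ω => (f.norm_coe_le_norm ω).trans hf1
    have hava : ∀ ω, |av E.p a f ω| ≤ 1 := fun ω =>
      av_abs_le E.hp0.le E.hp1.le a f ω 1 fun b => hfa _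
    have h1 := ih (a + 1) b (av E.p a f) (by omega) (by push_cast at hb; omega) (by
      intro ω ω' hω
      have : ∀ c, f (Function.update ω a c) = f (Function.update ω' a c) := by
        intro c
        refine hfd _ _ fun x hx => ?_
        by_cases hxa : x = a
        · subst hxa; simp
        · rw [Function.update_of_ne hxa, Function.update_of_ne hxa]
          refine hω x ⟨?_, hx.2⟩
          have := hx.1
          omega
      rw [av_apply, av_apply, this, this])
      ((ContinuousMap.norm_le _ zero_le_one).2 hava)
    have h2 := h a b ((1 / 2 : ℝ) • (f - av E.p a f)) ha (by
      intro ω ω' hω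
      have e1 := hfd ω ω' hω
      have e2 := av_dep (p := E.p) hfd a ω ω' hω
      simp only [ContinuousMap.smul_apply, ContinuousMap.sub_apply, e1, e2])
      ((ContinuousMap.norm_le _ zero_le_one).2 fun ω => by
        have e1 := abs_le.1 (hfa ω)
        have e2 := abs_le.1 (hava ω)
        rw [ContinuousMap.smul_apply, ContinuousMap.sub_apply, smul_eq_mul, Real.norm_eq_abs,
          abs_le]
        constructor <;> linarith) (by
        rw [map_smul, map_sub, av_av, sub_self, smul_zero])
    have e3 : ∫ ω, ((1 / 2 : ℝ) • (f - av E.p a f)) ω ∂ν =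
        1 / 2 * (∫ ω, f ω ∂ν - ∫ ω, av E.p a f ω ∂ν) := by
      rw [← integral_sub (intCF _ _) (intCF _ _), ← integral_const_mul]
      rfl
    rw [e3] at h2
    rw [mu_av] at h1
    have e4 : Real.exp (-ε * ((a + 1 : ℤ) : ℝ)) = Real.exp (-ε * a) * Real.exp (-ε) := by
      rw [← Real.exp_add]; push_cast; congr 1; ring
    rw [e4] at h1
    have e5 : 2 * K / (1 - Real.exp (-ε)) * Real.exp (-ε * a) =
        2 * K / (1 - Real.exp (-ε)) * (Real.exp (-ε * a) * Real.exp (-ε)) +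
          2 * (K * Real.exp (-ε * a)) := by
      field_simp
      ring
    rw [e5]
    have h1' := abs_le.1 h1
    have h2' := abs_le.1 h2
    rw [abs_le]
    constructor <;> linarith

end EastAux
open EastAux

/-- **The invariant measure is exponentially close to equilibrium far from the front**
(Proposition 5.3(1) of the paper): if `ν` is the invariant measure of the process seen from
the front, there are `ε > 0`, `K < ∞` such that for all `L, M ∈ ℕ` and every measurable
event `A` depending only on the coordinates in `⟦L, L+M⟧`, `|ν(A) − μ(A)| ≤ K e^{-ε L}`. -/
theorem invariant_measure_close_to_equilibrium (E : EastProcess) (hgap : 0 < gap E)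
    (ν : Measure Config) (hν : IsProbabilityMeasure ν) (hν0 : ν LO₀ = 1)
    (hinv : ∀ t : ℝ, 0 ≤ t → Qt E t ν = ν)
    (huniq : ∀ ν' : Measure Config, IsProbabilityMeasure ν' → ν' LO₀ = 1 →
      (∀ t : ℝ, 0 ≤ t → Qt E t ν' = ν') → ν' = ν) :
    ∃ ε K : ℝ, 0 < ε ∧
      ∀ (L M : ℕ) (A : Set Config), MeasurableSet A →
        DependsOnSet A (Set.Icc (L : ℤ) ((L : ℤ) + (M : ℤ))) →
        |(ν A).toReal - (E.μ A).toReal| ≤ K * Real.exp (-ε * L) := by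
  have hI : Inv E ν := Inv.mk' E ν hν hν0 hinv
  obtain ⟨ε, K, hε, hK, hmain⟩ := main_exp E hgap
  have hq : Real.exp (-ε) < 1 := by rw [Real.exp_lt_one_iff]; linarith
  have hq' : 0 < 1 - Real.exp (-ε) := by linarith
  refine ⟨ε, 2 * K / (1 - Real.exp (-ε)) + 1, hε, fun L M A _ hA => ?_⟩
  have hKq : 0 ≤ 2 * K / (1 - Real.exp (-ε)) := by positivity
  have hA' : DependsOnSet A ↑(Finset.Icc (L : ℤ) ((L : ℤ) + (M : ℤ))) := by
    rwa [Finset.coe_Icc]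
  rcases Nat.eq_zero_or_pos L with h0 | h0
  · subst h0
    have h1 : ν.real A ≤ 1 := measureReal_le_one
    have h2 : E.μ.real A ≤ 1 := measureReal_le_one
    have h3 : 0 ≤ ν.real A := measureReal_nonneg
    have h4 : 0 ≤ E.μ.real A := measureReal_nonneg
    have h5 : |ν.real A - E.μ.real A| ≤ 1 := by
      rw [abs_le]; constructor <;> linarith
    refine h5.trans ?_
    simp
    exact hKq
  · have h1 := tele E ν ε K hε hK (fun a b f => hmain ν hI a b f) (M + 1) L (L + M)
      (indC A _ hA') (by omega) (by push_cast; omega) (by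
        have := ind_dep hA'
        rw [Finset.coe_Icc] at this
        exact this) (indC_norm _ _ _)
    rw [int_indC, int_indC] at h1
    have h2 := Real.exp_pos (-ε * L)
    refine h1.trans ?_
    push_cast
    nlinarith

end
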